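/- Assume the Riemann Hypothesis and let 0 < B₁ < B₂ ≤ B₃ < 1 and c > 0. Suppose there are constants D and X₀ such that |V(X, δ) − (1/2)·δ·X²·(log(1/δ) + 1 − γ₀ − log 2π)| ≤ D·δ^{1+c}·X² for all X ≥ X₀ and all δ with X^{−B₃} ≤ δ ≤ X^{−B₁}. Then for every ε > 0 there exist constants C > 0 and X₁ such that for all X ≥ X₁ and all h with X^{1−B₃} ≤ h ≤ X^{1−B₂}: |Ṽ(X, h) − h·X·(log(X/h) − γ₀ − log 2π)| ≤ C·(h·X^{1+ε}·(h/X)^{c/3} + h·X^{1+ε}·(h·X^{−(1−B₁)})^{1/(3(1−B₁))}). -/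

import Mathlib

open Real MeasureTheory

/-- The Chebyshev function `ψ(x) = ∑_{n ≤ x} Λ(n)`. -/
noncomputable def chebyshevPsi (x : ℝ) : ℝ :=
  ∑ n ∈ Finset.range (⌊x⌋₊ + 1), ArithmeticFunction.vonMangoldt n

/-- The variance `V(X,δ) = ∫_1^X (ψ(x+δx) - ψ(x) - δx)² dx`. -/
noncomputable def zetaVarDelta (X δ : ℝ) : ℝ :=
  ∫ x in (1:ℝ)..X, (chebyshevPsi (x + δ * x) - chebyshevPsi x - δ * x) ^ 2

/-- The variance `Ṽ(X,h) = ∫_1^X (ψ(x+h) - ψ(x) - h)² dx`. -/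
noncomputable def zetaVarH (X h : ℝ) : ℝ :=
  ∫ x in (1:ℝ)..X, (chebyshevPsi (x + h) - chebyshevPsi x - h) ^ 2

/-!
Write `R x = ψ x - x`. Both variances are integrals of squared increments of `R`. Under the Riemann
hypothesis the Borel–Carathéodory theorem bounds the logarithmic derivative of `(s - 1) ζ(s)` by
`O(|s| ^ ε)` for `re s ≥ 1/2 + ε`, and Plancherel's theorem for the Mellin transform then yields
Selberg's bound for the mean square of `R (x + δ x) - R x`. Averaging over `δ` converts it into a
bound for increments `R (x + h) - R x` of fixed length.

Following Saffari and Vaughan, the hypothesis on `V(x, δ)` is integrated over the region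
`h ≤ δ x ≤ h e^η`. Fubini's theorem turns it into the mean value over `0 ≤ u ≤ η` of the integrals
of `(R (x + h e^u) - R x) ^ 2`. Replacing `h e^u` by `h` costs increments of `R` of length
`h (e^u - 1)`, which Selberg's bound makes small, and the choice `η = s ^ 2`, with `s` the relative
error aimed at, balances this loss against the loss in the averaged formula. The range of small
`x`, where `V(x, δ)` is not under control, is estimated by Selberg's bound directly.
-/

open Set Filter Topology Metric

section HolomorphicLogarithm

variable {f : ℂ → ℂ} {c : ℂ} {R : ℝ}

lemma exists_exp_mul_eq_of_ne_zero_on_ball (hR : 0 < R) (hf : DifferentiableOn ℂ f (ball c R))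
    (hne : ∀ w ∈ ball c R, f w ≠ 0) :
    ∃ L : ℂ → ℂ, L c = 0 ∧ (∀ w ∈ ball c R, HasDerivAt L (logDeriv f w) w) ∧
      ∀ w ∈ ball c R, f w = f c * Complex.exp (L w) := by
  have hlogDeriv : DifferentiableOn ℂ (logDeriv f) (ball c R) :=
    (hf.deriv isOpen_ball).div hf hne
  obtain ⟨L, hLc, hL⟩ := hlogDeriv.isExactOn_ball.with_val_at c 0
  refine ⟨L, hLc, hL, fun w hw => ?_⟩
  have hquot : ∀ z ∈ ball c R, HasDerivAt (fun z => f z * Complex.exp (-L z)) 0 z := by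
    intro z hz
    convert! ((hf.differentiableAt (isOpen_ball.mem_nhds hz)).hasDerivAt.mul
      (hL z hz).neg.cexp) using 1
    rw [logDeriv_apply]
    field_simp [hne z hz]
    ring
  have hconst := (convex_ball c R).is_const_of_fderivWithin_eq_zero (𝕜 := ℂ)
    (fun z hz => (hquot z hz).differentiableAt.differentiableWithinAt)
    (fun z hz => by
      rw [fderivWithin_of_isOpen isOpen_ball hz]
      ext
      simp [(hquot z hz).deriv])
    hw (mem_ball_self hR)
  simp only [hLc, neg_zero, Complex.exp_zero, mul_one] at hconst
  rw [← hconst, mul_assoc, ← Complex.exp_add, neg_add_cancel, Complex.exp_zero, mul_one]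

lemma norm_le_of_re_le_on_ball {M r : ℝ} {z : ℂ} (hM : 0 < M) (hr : 0 < r)
    (hf : DifferentiableOn ℂ f (ball c R)) (hfc : f c = 0)
    (hre : ∀ w ∈ ball c R, (f w).re ≤ M) (hz : ‖z - c‖ ≤ R - r) :
    ‖f z‖ ≤ 2 * M * R / r := by
  have hmem : ∀ w ∈ ball (0 : ℂ) R, c + w ∈ ball c R := by simp
  have hR : 0 < R := by linarith [norm_nonneg (z - c)]
  have hbound := Complex.borelCaratheodory_zero (f := fun w => f (c + w)) (z := z - c) hM
    (hf.comp (by fun_prop) hmem) (fun w hw => hre _ (hmem w hw)) hR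
    (by rw [mem_ball_zero_iff]; linarith) (by simpa using hfc)
  rw [add_sub_cancel] at hbound
  refine hbound.trans ?_
  gcongr <;> linarith

lemma norm_logDeriv_le_of_norm_le_exp_mul {M r : ℝ} {s : ℂ} (hM : 0 < M) (hr : 0 < r)
    (hf : DifferentiableOn ℂ f (ball c R)) (hne : ∀ w ∈ ball c R, f w ≠ 0)
    (hbound : ∀ w ∈ ball c R, ‖f w‖ ≤ exp M * ‖f c‖) (hs : ‖s - c‖ ≤ R - 2 * r) :
    ‖logDeriv f s‖ ≤ 2 * M * R / r / r := by
  have hR : 0 < R := by linarith [norm_nonneg (s - c)]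
  have hsphere : ∀ w, ‖w - s‖ ≤ r → ‖w - c‖ ≤ R - r := fun w hw => by
    linarith [norm_sub_le_norm_sub_add_norm_sub w s c]
  have hsub : closedBall s r ⊆ ball c R := fun w hw => by
    rw [mem_ball_iff_norm]
    linarith [hsphere w (mem_closedBall_iff_norm.mp hw)]
  obtain ⟨L, hLc, hL, hexp⟩ := exists_exp_mul_eq_of_ne_zero_on_ball hR hf hne
  have hLdiff : DifferentiableOn ℂ L (ball c R) :=
    fun w hw => (hL w hw).differentiableAt.differentiableWithinAt
  have hre : ∀ w ∈ ball c R, (L w).re ≤ M := by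
    intro w hw
    have hw' := hbound w hw
    rw [hexp w hw, norm_mul, Complex.norm_exp, mul_comm] at hw'
    exact exp_le_exp.mp (le_of_mul_le_mul_right hw' (norm_pos_iff.mpr (hne c (mem_ball_self hR))))
  have hcauchy := Complex.norm_deriv_le_of_forall_mem_sphere_norm_le hr
    ((hLdiff.mono hsub).diffContOnCl_ball subset_rfl) fun w hw =>
      norm_le_of_re_le_on_ball hM hr hLdiff hLc hre (hsphere w (mem_sphere_iff_norm.mp hw).le)
  rwa [(hL s (hsub (mem_closedBall_self hr.le))).deriv] at hcauchy

end HolomorphicLogarithm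

section ZetaGrowth

/-- The Mellin-type integral `∫_1^∞ {t} t^{-s-1} dt` of the fractional part, which continues
`ζ` to `0 < re s` through `ζ(s) = s / (s - 1) - s ∫_1^∞ {t} t^{-s-1} dt`. -/
noncomputable def fractIntegral (s : ℂ) : ℂ :=
  ∫ t in Ioi (1 : ℝ), ((Int.fract t : ℝ) : ℂ) * (t : ℂ) ^ (-(s + 1))

lemma norm_ofReal_fract_le_one (t : ℝ) : ‖((Int.fract t : ℝ) : ℂ)‖ ≤ 1 := by
  rw [Complex.norm_real, norm_of_nonneg (Int.fract_nonneg t)]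
  exact (Int.fract_lt_one t).le

lemma integrableOn_fract_mul_cpow {s : ℂ} (hs : 0 < s.re) :
    IntegrableOn (fun t : ℝ => ((Int.fract t : ℝ) : ℂ) * (t : ℂ) ^ (-(s + 1))) (Ioi 1) :=
  (integrableOn_Ioi_cpow_of_lt (by simpa using hs) one_pos).bdd_mul
    (Complex.measurable_ofReal.comp measurable_fract).aestronglyMeasurable
    (Eventually.of_forall norm_ofReal_fract_le_one)

lemma norm_fractIntegral_le {s : ℂ} (hs : 0 < s.re) : ‖fractIntegral s‖ ≤ 1 / s.re := by
  have hInt : ∫ t in Ioi (1 : ℝ), t ^ (-(s.re + 1)) = 1 / s.re := by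
    rw [integral_Ioi_rpow_of_lt (by linarith) one_pos]
    simp
  rw [← hInt]
  refine norm_integral_le_of_norm_le (integrableOn_Ioi_rpow_of_lt (by linarith) one_pos) ?_
  filter_upwards [ae_restrict_mem measurableSet_Ioi] with t ht
  have ht0 : (0 : ℝ) < t := one_pos.trans ht
  rw [norm_mul, Complex.norm_cpow_eq_rpow_re_of_pos ht0]
  exact mul_le_of_le_one_left (by positivity) (norm_ofReal_fract_le_one t)

lemma fractIntegral_eq_mellin (s : ℂ) :
    fractIntegral s = mellin ((Ioi (1 : ℝ)).indicator fun t => ((Int.fract t : ℝ) : ℂ)) (-s) := by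
  unfold fractIntegral mellin
  rw [← integral_indicator measurableSet_Ioi, ← integral_indicator measurableSet_Ioi]
  congr 1
  ext t
  by_cases ht : 1 < t
  · have ht0 : 0 < t := one_pos.trans ht
    simp only [indicator, mem_Ioi, ht, ht0, if_true, smul_eq_mul]
    rw [mul_comm]
    congr 2
    ring
  · simp [indicator, ht]

lemma differentiableAt_fractIntegral {s : ℂ} (hs : 0 < s.re) :
    DifferentiableAt ℂ fractIntegral s := by
  set f : ℝ → ℂ := (Ioi (1 : ℝ)).indicator (fun t => ((Int.fract t : ℝ) : ℂ))
  have hbound : ∀ t, ‖f t‖ ≤ 1 := fun t =>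
    (norm_indicator_le_norm_self _ _).trans (norm_ofReal_fract_le_one t)
  have hmeas : AEStronglyMeasurable f volume :=
    ((Complex.measurable_ofReal.comp measurable_fract).indicator
      measurableSet_Ioi).aestronglyMeasurable
  have hzero : ∀ᶠ t in 𝓝[>] (0 : ℝ), f t = 0 := by
    filter_upwards [mem_nhdsWithin_of_mem_nhds (Iio_mem_nhds one_pos)] with t ht
    exact indicator_of_notMem (by simpa using (le_of_lt ht)) _
  have hmellin : DifferentiableAt ℂ (mellin f) (-s) := by
    refine mellin_differentiableAt_of_isBigO_rpow (a := 0) (b := -s.re - 1) ?_ ?_ ?_ ?_ (by simp)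
    · exact ((locallyIntegrable_const (1 : ℝ)).mono hmeas
        (Eventually.of_forall (by simpa using hbound))).locallyIntegrableOn _
    · simp only [neg_zero, rpow_zero]
      exact Asymptotics.isBigO_of_le _ (by simpa using hbound)
    · simpa using hs
    · refine Asymptotics.IsBigO.of_bound 1 ?_
      filter_upwards [hzero] with t ht
      simp [ht]
  rw [funext fractIntegral_eq_mellin]
  exact DifferentiableAt.comp (g := mellin f) s hmellin differentiable_neg.differentiableAt

lemma integral_floor_mul_cpow {s : ℂ} (hs : 1 < s.re) :
    ∫ t in Ioi (1 : ℝ), ((⌊t⌋₊ : ℝ) : ℂ) * (t : ℂ) ^ (-(s + 1)) =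
      (∫ t in Ioi (1 : ℝ), (t : ℂ) ^ (-s)) - fractIntegral s := by
  unfold fractIntegral
  rw [← integral_sub (integrableOn_Ioi_cpow_of_lt (by simpa using hs) one_pos)
    (integrableOn_fract_mul_cpow (by linarith))]
  refine setIntegral_congr_fun measurableSet_Ioi fun t ht => ?_
  have ht0 : (0 : ℝ) < t := one_pos.trans ht
  have hfloor : (⌊t⌋₊ : ℝ) = t - Int.fract t := by
    rw [natCast_floor_eq_intCast_floor ht0.le, Int.self_sub_fract]
  have hpow : (t : ℂ) ^ (-s) = t * (t : ℂ) ^ (-(s + 1)) := by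
    rw [show -s = 1 + -(s + 1) by ring, Complex.cpow_add _ _ (by exact_mod_cast ht0.ne'),
      Complex.cpow_one]
  simp only [hfloor, hpow]
  push_cast
  ring

lemma riemannZeta₁_eq_mul_riemannZeta {s : ℂ} (hs : s ≠ 1) :
    riemannZeta₁ s = (s - 1) * riemannZeta s := by
  rw [riemannZeta_eq_inv_sub_mul hs, mul_inv_cancel_left₀ (sub_ne_zero.mpr hs)]

lemma riemannZeta₁_eq_of_one_lt_re {s : ℂ} (hs : 1 < s.re) :
    riemannZeta₁ s = s - s * (s - 1) * fractIntegral s := by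
  have hs1 : s ≠ 1 := by
    rintro rfl
    simp at hs
  have hzeta : riemannZeta s = s * ∫ t in Ioi (1 : ℝ), ((⌊t⌋₊ : ℝ) : ℂ) * t ^ (-(s + 1)) := by
    have habel := LSeries_eq_mul_integral_of_nonneg (fun _ => 1) (r := 1) zero_le_one hs
      (by simpa using Asymptotics.isBigO_refl _ _) (fun _ => zero_le_one)
    rw [← LSeries_one_eq_riemannZeta hs,
      show (1 : ℕ → ℂ) = fun n => (((fun _ => 1 : ℕ → ℝ) n : ℝ) : ℂ) by ext; simp, habel]
    simp
  rw [riemannZeta₁_eq_mul_riemannZeta hs1, hzeta, integral_floor_mul_cpow hs,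
    integral_Ioi_cpow_of_lt (by simpa using hs) one_pos, Complex.ofReal_one, Complex.one_cpow]
  have hs0 : s - 1 ≠ 0 := sub_ne_zero.mpr hs1
  have hs0' : -s + 1 ≠ 0 := by
    rw [← neg_ne_zero]
    convert! hs0 using 1
    ring
  field_simp
  ring

lemma riemannZeta₁_eq_sub_mul_fractIntegral {s : ℂ} (hs : 0 < s.re) :
    riemannZeta₁ s = s - s * (s - 1) * fractIntegral s := by
  have hopen : IsOpen {s : ℂ | 0 < s.re} := isOpen_lt continuous_const Complex.continuous_re
  have hleft : AnalyticOnNhd ℂ riemannZeta₁ {s : ℂ | 0 < s.re} :=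
    differentiable_riemannZeta₁.differentiableOn.analyticOnNhd hopen
  have hright : AnalyticOnNhd ℂ (fun s => s - s * (s - 1) * fractIntegral s)
      {s : ℂ | 0 < s.re} := by
    refine DifferentiableOn.analyticOnNhd (fun z hz => ?_) hopen
    have := differentiableAt_fractIntegral hz
    exact DifferentiableAt.differentiableWithinAt (by fun_prop)
  refine hleft.eqOn_of_preconnected_of_eventuallyEq hright (convex_halfSpace_re_gt 0).isPreconnected
    (z₀ := 2) (by simp) ?_ hs
  have hnhds : {s : ℂ | 1 < s.re} ∈ 𝓝 (2 : ℂ) :=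
    (isOpen_lt continuous_const Complex.continuous_re).mem_nhds (by simp)
  filter_upwards [hnhds] with z hz using riemannZeta₁_eq_of_one_lt_re hz

lemma norm_riemannZeta₁_le {s : ℂ} (hs : 1 / 2 ≤ s.re) :
    ‖riemannZeta₁ s‖ ≤ 3 * (1 + ‖s‖) ^ 2 := by
  have hs0 : 0 < s.re := by linarith
  have hfract : ‖fractIntegral s‖ ≤ 2 :=
    (norm_fractIntegral_le hs0).trans (by rw [div_le_iff₀ hs0]; linarith)
  have hsub : ‖s - 1‖ ≤ ‖s‖ + 1 := by simpa using norm_sub_le s 1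
  rw [riemannZeta₁_eq_sub_mul_fractIntegral hs0]
  calc ‖s - s * (s - 1) * fractIntegral s‖
      ≤ ‖s‖ + ‖s‖ * ‖s - 1‖ * ‖fractIntegral s‖ := by
        simpa only [norm_mul] using norm_sub_le s (s * (s - 1) * fractIntegral s)
    _ ≤ ‖s‖ + ‖s‖ * (‖s‖ + 1) * 2 := by gcongr
    _ ≤ 3 * (1 + ‖s‖) ^ 2 := by nlinarith [norm_nonneg s]

lemma norm_LSeries_moebius_le (s : ℂ) (hs : 1 < s.re) :
    ‖LSeries (fun n => ((ArithmeticFunction.moebius n : ℤ) : ℂ)) s‖ ≤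
      ∑' n : ℕ, ‖LSeries.term (fun _ => 1) s.re n‖ := by
  have hsum : LSeriesSummable (fun _ => 1) s.re := LSeriesSummable_one_iff.mpr (by simpa using hs)
  refine tsum_of_norm_bounded hsum.norm.hasSum fun n => ?_
  rcases eq_or_ne n 0 with rfl | hn
  · simp
  · simp only [LSeries.norm_term_eq, hn, if_false, Complex.ofReal_re, norm_one,
      Complex.norm_intCast]
    gcongr
    exact_mod_cast ArithmeticFunction.abs_moebius_le_one

lemma exists_one_le_mul_norm_riemannZeta₁_two_add :
    ∃ K : ℝ, 0 < K ∧ ∀ t : ℝ, 1 ≤ K * ‖riemannZeta₁ (2 + t * Complex.I)‖ := by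
  suffices hK : ∃ K : ℝ, ∀ t : ℝ, 1 ≤ K * ‖riemannZeta₁ (2 + t * Complex.I)‖ by
    obtain ⟨K, hK⟩ := hK
    refine ⟨K, ?_, hK⟩
    by_contra! hK0
    linarith [hK 0, mul_nonpos_of_nonpos_of_nonneg hK0
      (norm_nonneg (riemannZeta₁ (2 + ((0 : ℝ) : ℂ) * Complex.I)))]
  refine ⟨∑' n : ℕ, ‖LSeries.term (fun _ => 1) (2 : ℝ) n‖, fun t => ?_⟩
  set s : ℂ := 2 + t * Complex.I with hs
  have hre : s.re = 2 := by simp [hs]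
  have hs1 : s ≠ 1 := fun h => by norm_num [h] at hre
  have hmoebius := norm_LSeries_moebius_le s (by rw [hre]; norm_num)
  rw [hre] at hmoebius
  have hinv : ‖(s - 1)⁻¹‖ ≤ 1 := by
    rw [norm_inv]
    refine inv_le_one_of_one_le₀ ?_
    have := Complex.re_le_norm (s - 1)
    rw [Complex.sub_re, hre, Complex.one_re] at this
    linarith
  have hprod := ArithmeticFunction.LSeries_zeta_mul_Lseries_moebius (s := s) (by rw [hre]; norm_num)
  rw [ArithmeticFunction.LSeries_zeta_eq_riemannZeta (by rw [hre]; norm_num),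
    riemannZeta_eq_inv_sub_mul hs1] at hprod
  calc 1 = ‖(s - 1)⁻¹‖ * ‖riemannZeta₁ s‖ *
        ‖LSeries (fun n => ((ArithmeticFunction.moebius n : ℤ) : ℂ)) s‖ := by
        rw [← norm_mul, ← norm_mul, hprod, norm_one]
    _ ≤ 1 * ‖riemannZeta₁ s‖ * ∑' n : ℕ, ‖LSeries.term (fun _ => 1) (2 : ℝ) n‖ := by gcongr
    _ = _ := by ring

lemma riemannZeta₁_ne_zero (hRH : RiemannHypothesis) {s : ℂ} (hs : 1 / 2 < s.re) :
    riemannZeta₁ s ≠ 0 := by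
  intro hzero
  rcases eq_or_ne s 1 with rfl | hs1
  · simp at hzero
  have hzeta : riemannZeta s = 0 := by rw [riemannZeta_eq_inv_sub_mul hs1, hzero, mul_zero]
  have hnontrivial : ¬∃ n : ℕ, s = -2 * (n + 1) := by
    rintro ⟨n, rfl⟩
    have hre : ((-2 : ℂ) * ((n : ℂ) + 1)).re = -2 * (n + 1) := by simp
    rw [hre] at hs
    linarith [n.cast_nonneg (α := ℝ)]
  linarith [hRH s hzeta hnontrivial hs1]

lemma log_two_add_mul_sq_le {A ε y : ℝ} (hA : 0 ≤ A) (hε : 0 < ε) (hy : 1 ≤ y) :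
    log (2 + A * y ^ 2) ≤ (2 + A + 2 / ε) * y ^ ε := by
  have hy0 : 0 < y := by linarith
  have hle : 2 + A * y ^ 2 ≤ (2 + A) * y ^ 2 := by nlinarith
  calc log (2 + A * y ^ 2) ≤ log ((2 + A) * y ^ 2) := log_le_log (by positivity) hle
    _ = log (2 + A) + 2 * log y := by
        rw [log_mul (by positivity) (by positivity), log_pow, Nat.cast_ofNat]
    _ ≤ (2 + A) * y ^ ε + 2 * (y ^ ε / ε) := by
        gcongr
        · exact (log_le_self (by positivity)).trans
            (le_mul_of_one_le_right (by positivity) (one_le_rpow hy hε.le))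
        · exact log_le_rpow_div hy0.le hε
    _ = _ := by ring

lemma norm_two_add_im_mul_I_le (s : ℂ) : ‖2 + s.im * Complex.I‖ ≤ ‖s‖ + 2 := by
  refine (norm_add_le _ _).trans ?_
  rw [norm_mul, Complex.norm_I, Complex.norm_real, mul_one, Complex.norm_ofNat, norm_eq_abs]
  linarith [Complex.abs_im_le_norm s]

lemma half_lt_re_of_mem_ball_two_add {t : ℝ} {w : ℂ}
    (hw : w ∈ ball (2 + t * Complex.I) (3 / 2)) : 1 / 2 < w.re := by
  have hre := (Complex.abs_re_le_norm _).trans_lt (mem_ball_iff_norm.mp hw)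
  rw [Complex.sub_re, show (2 + t * Complex.I).re = 2 by simp] at hre
  linarith [(abs_lt.mp hre).1]

lemma exists_norm_logDeriv_riemannZeta₁_le (hRH : RiemannHypothesis) {a ε : ℝ} (ha : 0 < a)
    (hε : 0 < ε) :
    ∃ C : ℝ, 0 < C ∧ ∀ s : ℂ, 1 / 2 + a ≤ s.re → s.re ≤ 2 →
      ‖logDeriv riemannZeta₁ s‖ ≤ C * (1 + ‖s‖) ^ ε := by
  obtain ⟨K, hK, hlower⟩ := exists_one_le_mul_norm_riemannZeta₁_two_add
  refine ⟨2 * (2 + K * 75 + 2 / ε) * (3 / 2) / (a / 2) / (a / 2), by positivity,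
    fun s hs hs2 => ?_⟩
  set c : ℂ := 2 + s.im * Complex.I with hc
  set A : ℝ := 2 + K * 75 * (1 + ‖s‖) ^ 2
  have hA1 : 1 < A := by
    have : 0 ≤ K * 75 * (1 + ‖s‖) ^ 2 := by positivity
    linarith
  have hgrowth : ∀ w ∈ ball c (3 / 2), ‖riemannZeta₁ w‖ ≤ exp (log A) * ‖riemannZeta₁ c‖ := by
    intro w hw
    have hwn : ‖w‖ ≤ ‖s‖ + 4 := by
      linarith [norm_le_norm_sub_add w c, mem_ball_iff_norm.mp hw, norm_two_add_im_mul_I_le s]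
    rw [exp_log (by linarith)]
    calc ‖riemannZeta₁ w‖ ≤ 3 * (1 + ‖w‖) ^ 2 :=
          norm_riemannZeta₁_le (half_lt_re_of_mem_ball_two_add hw).le
      _ ≤ 3 * (5 * (1 + ‖s‖)) ^ 2 * 1 := by
          rw [mul_one]
          gcongr
          linarith [norm_nonneg s]
      _ ≤ 3 * (5 * (1 + ‖s‖)) ^ 2 * (K * ‖riemannZeta₁ c‖) := by
          gcongr
          exact hlower s.im
      _ ≤ A * ‖riemannZeta₁ c‖ := by nlinarith [norm_nonneg (riemannZeta₁ c)]
  have hsc : ‖s - c‖ ≤ 3 / 2 - 2 * (a / 2) := by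
    rw [show s - c = ((s.re - 2 : ℝ) : ℂ) by apply Complex.ext <;> simp [hc], Complex.norm_real,
      norm_eq_abs, abs_le]
    constructor <;> linarith
  refine (norm_logDeriv_le_of_norm_le_exp_mul (log_pos hA1) (half_pos ha)
    differentiable_riemannZeta₁.differentiableOn
    (fun w hw => riemannZeta₁_ne_zero hRH (half_lt_re_of_mem_ball_two_add hw)) hgrowth hsc).trans ?_
  calc 2 * log A * (3 / 2) / (a / 2) / (a / 2)
      ≤ 2 * ((2 + K * 75 + 2 / ε) * (1 + ‖s‖) ^ ε) * (3 / 2) / (a / 2) / (a / 2) := by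
        gcongr
        exact log_two_add_mul_sq_le (by positivity) hε (by linarith [norm_nonneg s])
    _ = _ := by ring

end ZetaGrowth

section Plancherel

open scoped FourierTransform SchwartzMap

variable {E F : Type*} [NormedAddCommGroup E] [InnerProductSpace ℝ E] [FiniteDimensional ℝ E]
  [MeasurableSpace E] [BorelSpace E] [NormedAddCommGroup F] [InnerProductSpace ℂ F]
  [CompleteSpace F] {g : E → F}

lemma integral_schwartzMap_smul_fourier_toLp (hg : Integrable g) (hg2 : MemLp g 2)
    (Φ : 𝓢(E, ℂ)) :
    ∫ x, Φ x • (𝓕 (hg2.toLp g) : Lp (α := E) F 2 volume) x = ∫ x, Φ x • 𝓕 g x := by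
  have hself := VectorFourier.integral_fourierIntegral_smul_eq_flip (μ := volume) (ν := volume)
    (L := innerₗ E) continuous_fourierChar (f := (Φ : E → ℂ)) continuous_inner Φ.integrable hg
  rw [flip_innerₗ] at hself
  rw [← Lp.toTemperedDistribution_apply (μ := volume), ← Lp.fourier_toTemperedDistribution_eq,
    TemperedDistribution.fourier_apply, Lp.toTemperedDistribution_apply]
  refine Eq.trans (integral_congr_ae ?_) hself
  filter_upwards [hg2.coeFn_toLp] with x hx
  rw [hx, SchwartzMap.fourier_coe]
  rfl

lemma fourier_toLp_ae_eq (hg : Integrable g) (hg2 : MemLp g 2) :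
    (𝓕 (hg2.toLp g) : Lp (α := E) F 2 volume) =ᵐ[volume] 𝓕 g := by
  have hcont : Continuous (𝓕 g) :=
    VectorFourier.fourierIntegral_continuous continuous_fourierChar (L := innerₗ E)
      continuous_inner hg
  refine ae_eq_of_integral_contDiff_smul_eq
    ((Lp.memLp (𝓕 (hg2.toLp g))).locallyIntegrable (by norm_num)) hcont.locallyIntegrable
    fun φ hφ hφc => ?_
  have hsupp : HasCompactSupport fun x => (φ x : ℂ) := hφc.comp_left Complex.ofReal_zero
  exact integral_schwartzMap_smul_fourier_toLp hg hg2
    (hsupp.toSchwartzMap (Complex.ofRealCLM.contDiff.comp hφ))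

theorem lintegral_enorm_fourier_sq (hg : Integrable g) (hg2 : MemLp g 2) :
    ∫⁻ u, ‖𝓕 g u‖ₑ ^ 2 = ∫⁻ u, ‖g u‖ₑ ^ 2 := by
  have hnorm := Lp.norm_fourier_eq (hg2.toLp g)
  rw [Lp.norm_def, Lp.norm_def, ENNReal.toReal_eq_toReal_iff' (Lp.eLpNorm_ne_top _)
    (Lp.eLpNorm_ne_top _), eLpNorm_congr_ae (fourier_toLp_ae_eq hg hg2),
    eLpNorm_congr_ae hg2.coeFn_toLp, eLpNorm_eq_lintegral_rpow_enorm_toReal (by norm_num)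
    (by norm_num), eLpNorm_eq_lintegral_rpow_enorm_toReal (by norm_num) (by norm_num)] at hnorm
  simpa using ENNReal.rpow_left_injective (by norm_num) hnorm

theorem lintegral_enorm_fourierInv_sq (hg : Integrable g) (hg2 : MemLp g 2) :
    ∫⁻ u, ‖𝓕⁻ g u‖ₑ ^ 2 = ∫⁻ u, ‖g u‖ₑ ^ 2 := by
  simp_rw [fourierInv_eq_fourier_neg]
  rw [← lintegral_enorm_fourier_sq hg hg2]
  exact lintegral_neg_eq_self (fun u : E => ‖𝓕 g u‖ₑ ^ 2)

end Plancherel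

section VerticalLines

/-- The point `σ + 2πit`: with this scaling, integrals of `e^{su}` along a vertical line are
inverse Fourier transforms in `t`. -/
noncomputable def verticalPoint (σ t : ℝ) : ℂ := σ + ((2 * π * t : ℝ) : ℂ) * Complex.I

@[simp] lemma verticalPoint_re (σ t : ℝ) : (verticalPoint σ t).re = σ := by simp [verticalPoint]

@[simp] lemma verticalPoint_im (σ t : ℝ) : (verticalPoint σ t).im = 2 * π * t := by
  simp [verticalPoint]

lemma continuous_verticalPoint (σ : ℝ) : Continuous (verticalPoint σ) := by
  unfold verticalPoint
  fun_prop

lemma abs_le_abs_im_verticalPoint (σ t : ℝ) : |t| ≤ |(verticalPoint σ t).im| := by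
  rw [verticalPoint_im, abs_mul, abs_of_pos two_pi_pos]
  exact le_mul_of_one_le_left (abs_nonneg t) (by linarith [pi_gt_three])

variable {K : ℂ → ℂ} {σ σ₁ σ₂ B C r : ℝ}

lemma continuous_comp_verticalPoint (hK : ∀ t, ContinuousAt K (verticalPoint σ t)) :
    Continuous fun t => K (verticalPoint σ t) :=
  continuous_iff_continuousAt.mpr fun t =>
    ContinuousAt.comp (hK t) (continuous_verticalPoint σ).continuousAt

lemma integrable_comp_verticalPoint (hr : 1 < r)
    (hK : ∀ t, ContinuousAt K (verticalPoint σ t))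
    (hbound : ∀ t, ‖K (verticalPoint σ t)‖ ≤ C * (1 + |(verticalPoint σ t).im|) ^ (-r)) :
    Integrable fun t => K (verticalPoint σ t) := by
  have hC : 0 ≤ C := by
    have := (norm_nonneg _).trans (hbound 0)
    simpa using this
  have hdom : Integrable fun t : ℝ => C * (1 + ‖t‖) ^ (-r) :=
    (integrable_one_add_norm (by simpa using hr)).const_mul C
  refine hdom.mono' (continuous_comp_verticalPoint hK).aestronglyMeasurable
    (Eventually.of_forall fun t => (hbound t).trans ?_)
  gcongr C * ?_
  exact rpow_le_rpow_of_nonpos (by positivity)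
    (by linarith [abs_le_abs_im_verticalPoint σ t, norm_eq_abs t]) (by linarith)

lemma norm_intervalIntegral_vertical_sub_le {T : ℝ} (hσ : σ₁ ≤ σ₂)
    (hK : ∀ s : ℂ, σ₁ ≤ s.re → s.re ≤ σ₂ → DifferentiableAt ℂ K s)
    (hbound : ∀ s : ℂ, σ₁ ≤ s.re → s.re ≤ σ₂ → |s.im| = |T| → ‖K s‖ ≤ B) :
    ‖(∫ y in (-T)..T, K (σ₂ + y * Complex.I)) - ∫ y in (-T)..T, K (σ₁ + y * Complex.I)‖ ≤
      2 * (B * (σ₂ - σ₁)) := by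
  have hrect := Complex.integral_boundary_rect_eq_zero_of_differentiableOn K
    (σ₁ + (-T : ℝ) * Complex.I) (σ₂ + (T : ℝ) * Complex.I) fun s hs => by
      have hre := (Complex.mem_reProdIm.mp hs).1
      simp only [Complex.add_re, Complex.ofReal_re, Complex.mul_re, Complex.I_re, mul_zero,
        Complex.ofReal_im, Complex.I_im, mul_one, sub_self, add_zero, uIcc_of_le hσ] at hre
      exact (hK s hre.1 hre.2).differentiableWithinAt
  simp only [Complex.add_re, Complex.ofReal_re, Complex.mul_re, Complex.I_re, mul_zero,
    Complex.ofReal_im, Complex.I_im, mul_one, sub_self, add_zero, Complex.add_im,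
    Complex.mul_im, zero_add, smul_eq_mul] at hrect
  have hhorizontal : ∀ τ : ℝ, |τ| = |T| →
      ‖∫ x in σ₁..σ₂, K (x + τ * Complex.I)‖ ≤ B * (σ₂ - σ₁) := by
    intro τ hτ
    rw [← abs_of_nonneg (sub_nonneg.mpr hσ)]
    refine intervalIntegral.norm_integral_le_of_norm_le_const fun x hx => ?_
    rw [uIoc_of_le hσ] at hx
    exact hbound _ (by simpa using hx.1.le) (by simpa using hx.2) (by simpa using hτ)
  have hbottom := hhorizontal (-T) (abs_neg T)
  have htop := hhorizontal T rfl
  set bottom := ∫ x in σ₁..σ₂, K (x + (-T : ℝ) * Complex.I)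
  set top := ∫ x in σ₁..σ₂, K (x + (T : ℝ) * Complex.I)
  set right := ∫ y in (-T)..T, K (σ₂ + y * Complex.I)
  set left := ∫ y in (-T)..T, K (σ₁ + y * Complex.I)
  have hsides : right - left = Complex.I * (bottom - top) := by
    linear_combination -Complex.I * hrect + (right - left) * Complex.I_mul_I
  rw [hsides, norm_mul, Complex.norm_I, one_mul]
  exact (norm_sub_le _ _).trans (by linarith)

lemma integral_verticalPoint (K : ℂ → ℂ) (σ : ℝ) :
    ∫ t, K (verticalPoint σ t) = (2 * π)⁻¹ • ∫ y : ℝ, K (σ + y * Complex.I) := by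
  rw [← abs_of_pos (inv_pos.mpr two_pi_pos)]
  exact Measure.integral_comp_mul_left (fun y : ℝ => K (σ + y * Complex.I)) (2 * π)

theorem integral_comp_verticalPoint_eq (hr : 1 < r) (hσ : σ₁ ≤ σ₂)
    (hK : ∀ s : ℂ, σ₁ ≤ s.re → s.re ≤ σ₂ → DifferentiableAt ℂ K s)
    (hbound : ∀ s : ℂ, σ₁ ≤ s.re → s.re ≤ σ₂ → ‖K s‖ ≤ C * (1 + |s.im|) ^ (-r)) :
    ∫ t, K (verticalPoint σ₁ t) = ∫ t, K (verticalPoint σ₂ t) := by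
  have hInt : ∀ σ, σ₁ ≤ σ → σ ≤ σ₂ → Integrable fun y : ℝ => K (σ + y * Complex.I) := by
    intro σ h₁ h₂
    have h := integrable_comp_verticalPoint (K := K) (σ := σ) hr
      (fun t => (hK _ (by simpa using h₁) (by simpa using h₂)).continuousAt)
      (fun t => hbound _ (by simpa using h₁) (by simpa using h₂))
    exact (integrable_comp_mul_left_iff (fun y : ℝ => K (σ + y * Complex.I))
      two_pi_pos.ne').mp h
  have hlim : Tendsto (fun T : ℝ => 2 * (C * (1 + T) ^ (-r) * (σ₂ - σ₁))) atTop (𝓝 0) := by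
    have h0 : Tendsto (fun T : ℝ => (1 + T) ^ (-r)) atTop (𝓝 0) :=
      (tendsto_rpow_neg_atTop (by linarith)).comp (tendsto_atTop_add_const_left _ 1 tendsto_id)
    simpa using ((h0.const_mul C).mul_const (σ₂ - σ₁)).const_mul 2
  have hdiff : Tendsto (fun T : ℝ => (∫ y in (-T)..T, K (σ₂ + y * Complex.I)) -
      ∫ y in (-T)..T, K (σ₁ + y * Complex.I)) atTop (𝓝 0) := by
    refine squeeze_zero_norm' ?_ hlim
    filter_upwards [eventually_ge_atTop 0] with T hT
    refine norm_intervalIntegral_vertical_sub_le hσ hK fun s h₁ h₂ him => ?_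
    simpa only [him, abs_of_nonneg hT] using hbound s h₁ h₂
  have htendsto : ∀ σ, σ₁ ≤ σ → σ ≤ σ₂ → Tendsto (fun T : ℝ => ∫ y in (-T)..T,
      K (σ + y * Complex.I)) atTop (𝓝 (∫ y : ℝ, K (σ + y * Complex.I))) := fun σ h₁ h₂ =>
    intervalIntegral_tendsto_integral (hInt σ h₁ h₂) tendsto_neg_atTop_atBot tendsto_id
  rw [integral_verticalPoint, integral_verticalPoint, ← sub_eq_zero.mp (tendsto_nhds_unique
    ((htendsto σ₂ hσ le_rfl).sub (htendsto σ₁ le_rfl hσ)) hdiff)]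

open scoped FourierTransform in
lemma fourierInv_eq_integral_verticalPoint (g : ℝ → ℂ) (σ u : ℝ) :
    𝓕⁻ g u = (∫ t, g t * Complex.exp (verticalPoint σ t * u)) * Complex.exp (-(σ * u : ℝ)) := by
  rw [fourierInv_eq', ← integral_mul_const]
  refine integral_congr_ae (Eventually.of_forall fun t => ?_)
  simp only [smul_eq_mul]
  rw [mul_comm (Complex.exp _), mul_assoc (g t), ← Complex.exp_add]
  congr 2
  simp only [verticalPoint, inner_apply]
  push_cast
  ring

theorem lintegral_enorm_integral_verticalPoint_sq {g : ℝ → ℂ} (hg : Integrable g)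
    (hg2 : MemLp g 2) (σ : ℝ) :
    ∫⁻ u : ℝ, ‖∫ t, g t * Complex.exp (verticalPoint σ t * u)‖ₑ ^ 2 *
      ENNReal.ofReal (exp (-(2 * σ) * u)) = ∫⁻ t, ‖g t‖ₑ ^ 2 := by
  rw [← lintegral_enorm_fourierInv_sq hg hg2]
  refine lintegral_congr fun u => ?_
  have hexp : ‖Complex.exp (-(σ * u : ℝ))‖ₑ ^ 2 = ENNReal.ofReal (exp (-(2 * σ) * u)) := by
    rw [← ofReal_norm, ← ENNReal.ofReal_pow (norm_nonneg _), Complex.norm_exp, ← exp_nat_mul,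
      Complex.neg_re, Complex.ofReal_re]
    congr 2
    push_cast
    ring
  rw [fourierInv_eq_integral_verticalPoint g σ u, enorm_mul, mul_pow, hexp]

end VerticalLines

/-- Fatou's lemma for difference quotients. -/
theorem setLIntegral_deriv_sq_mul_le {f f' w : ℝ → ℝ} {s : Set ℝ} {B : ENNReal}
    (hs : MeasurableSet s) (hf : Continuous f) (hw : Measurable w)
    (hderiv : ∀ᵐ u, u ∈ s → HasDerivAt f (f' u) u)
    (hB : ∀ l : ℝ, 0 < l → l ≤ 1 →
      ∫⁻ u, ENNReal.ofReal (((f (u + l) - f u) / l) ^ 2 * w u) ≤ B) :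
    ∫⁻ u in s, ENNReal.ofReal (f' u ^ 2 * w u) ≤ B := by
  set l : ℕ → ℝ := fun n => 1 / ((n : ℝ) + 1) with hl
  have hl0 : ∀ n, 0 < l n := fun n => by positivity
  have hl1 : ∀ n, l n ≤ 1 := fun n => by
    rw [hl, div_le_one (by positivity)]
    linarith [n.cast_nonneg (α := ℝ)]
  have hltendsto : Tendsto l atTop (𝓝[≠] 0) := tendsto_nhdsWithin_iff.mpr
    ⟨tendsto_one_div_add_atTop_nhds_zero_nat, Eventually.of_forall fun n => (hl0 n).ne'⟩
  have hmeas : ∀ n, Measurable fun u =>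
      ENNReal.ofReal (((f (u + l n) - f u) / l n) ^ 2 * w u) := by
    intro n
    have hquot : Continuous fun u => ((f (u + l n) - f u) / l n) ^ 2 := by fun_prop
    exact (hquot.measurable.mul hw).ennreal_ofReal
  have hlim : ∀ᵐ u ∂(volume.restrict s), ENNReal.ofReal (f' u ^ 2 * w u) =
      liminf (fun n => ENNReal.ofReal (((f (u + l n) - f u) / l n) ^ 2 * w u)) atTop := by
    refine (ae_restrict_iff' hs).mpr ?_
    filter_upwards [hderiv] with u hu hus
    have hslope := (hasDerivAt_iff_tendsto_slope_zero.mp (hu hus)).comp hltendsto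
    refine (Tendsto.liminf_eq (ENNReal.tendsto_ofReal (Tendsto.mul_const _ ?_))).symm
    refine (hslope.pow 2).congr fun n => ?_
    rw [Function.comp_apply, smul_eq_mul, inv_mul_eq_div]
  rw [lintegral_congr_ae hlim]
  exact (lintegral_liminf_le hmeas).trans (liminf_le_of_frequently_le'
    (Frequently.of_forall fun n =>
      (setLIntegral_le_lintegral _ _).trans (hB (l n) (hl0 n) (hl1 n))))

section PsiRemainder

lemma chebyshevPsi_eq_psi : chebyshevPsi = Chebyshev.psi := by
  ext x
  rw [Chebyshev.psi_eq_sum_Icc, chebyshevPsi]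
  congr 1
  ext n
  simp

lemma monotone_chebyshevPsi : Monotone chebyshevPsi :=
  chebyshevPsi_eq_psi ▸ Chebyshev.psi_mono

lemma chebyshevPsi_nonneg (x : ℝ) : 0 ≤ chebyshevPsi x :=
  chebyshevPsi_eq_psi ▸ Chebyshev.psi_nonneg x

lemma chebyshevPsi_le {x : ℝ} (hx : 0 ≤ x) : chebyshevPsi x ≤ 6 * x := by
  have hlog : log 4 ≤ 2 := by
    rw [show (4 : ℝ) = 2 ^ 2 by norm_num, log_pow]
    have := log_two_lt_d9
    push_cast
    linarith
  rw [chebyshevPsi_eq_psi]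
  exact (Chebyshev.psi_le_const_mul_self hx).trans (by gcongr; linarith)

/-- The error term `ψ(x) - x` of the prime number theorem. -/
noncomputable def psiRemainder (x : ℝ) : ℝ := chebyshevPsi x - x

lemma measurable_psiRemainder : Measurable psiRemainder :=
  monotone_chebyshevPsi.measurable.sub measurable_id

lemma abs_psiRemainder_le {x : ℝ} (hx : 0 ≤ x) : |psiRemainder x| ≤ 6 * x := by
  have hle := chebyshevPsi_le hx
  have hnonneg := chebyshevPsi_nonneg x
  rw [psiRemainder, abs_le]
  constructor <;> linarith

end PsiRemainder

section MellinTransform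

variable {s : ℂ}

/-- The Mellin transform `∫₁^∞ (ψ(x) - x) x^(-s-1) dx`, continued through
`ζ₁(s) = (s - 1) ζ(s)`, which is entire. -/
noncomputable def psiRemainderTransform (s : ℂ) : ℂ := -(logDeriv riemannZeta₁ s + 1) / s

lemma ofReal_mul_cpow_neg_add_one {t : ℝ} (ht : 0 < t) (s : ℂ) :
    (t : ℂ) * (t : ℂ) ^ (-(s + 1)) = (t : ℂ) ^ (-s) := by
  rw [show -s = 1 + -(s + 1) by ring, Complex.cpow_add _ _ (mod_cast ht.ne'), Complex.cpow_one]

lemma integrableOn_ofReal_mul_cpow (hs : 1 < s.re) :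
    IntegrableOn (fun t : ℝ => (t : ℂ) * (t : ℂ) ^ (-(s + 1))) (Ioi 1) :=
  (integrableOn_Ioi_cpow_of_lt (a := -s) (by simpa using hs) zero_lt_one).congr_fun
    (fun _ ht => (ofReal_mul_cpow_neg_add_one (zero_lt_one.trans ht) s).symm) measurableSet_Ioi

lemma integral_ofReal_mul_cpow (hs : 1 < s.re) :
    ∫ t in Ioi (1 : ℝ), (t : ℂ) * (t : ℂ) ^ (-(s + 1)) = 1 / (s - 1) := by
  rw [setIntegral_congr_fun measurableSet_Ioi
      fun _ ht => ofReal_mul_cpow_neg_add_one (zero_lt_one.trans ht) s,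
    integral_Ioi_cpow_of_lt (a := -s) (by simpa using hs) zero_lt_one]
  simp only [Complex.ofReal_one, Complex.one_cpow]
  rw [show -s + 1 = -(s - 1) by ring, div_neg, neg_div, neg_neg]

lemma integrableOn_chebyshevPsi_mul_cpow (hs : 1 < s.re) :
    IntegrableOn (fun t : ℝ => (chebyshevPsi t : ℂ) * (t : ℂ) ^ (-(s + 1))) (Ioi 1) := by
  refine Integrable.mono' ((integrableOn_ofReal_mul_cpow hs).norm.const_mul 6) ?_ ?_
  · exact ((Complex.measurable_ofReal.comp monotone_chebyshevPsi.measurable).mul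
      (Complex.measurable_ofReal.pow_const _)).aestronglyMeasurable
  · filter_upwards [ae_restrict_mem measurableSet_Ioi] with t ht
    have ht0 : 0 ≤ t := zero_le_one.trans (le_of_lt ht)
    rw [norm_mul, norm_mul, Complex.norm_of_nonneg (chebyshevPsi_nonneg t),
      Complex.norm_of_nonneg ht0, ← mul_assoc]
    gcongr
    exact chebyshevPsi_le ht0

lemma integral_chebyshevPsi_mul_cpow (hs : 1 < s.re) :
    ∫ t in Ioi (1 : ℝ), (chebyshevPsi t : ℂ) * (t : ℂ) ^ (-(s + 1)) =
      -logDeriv riemannZeta s / s := by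
  have hs0 : s ≠ 0 := Complex.ne_zero_of_one_lt_re hs
  have hsum (x : ℝ) :
      chebyshevPsi x = ∑ n ∈ Finset.Icc 1 ⌊x⌋₊, ArithmeticFunction.vonMangoldt n := by
    rw [chebyshevPsi_eq_psi, Chebyshev.psi, ← Finset.Icc_add_one_left_eq_Ioc, zero_add]
  have hO : (fun n : ℕ => ∑ k ∈ Finset.Icc 1 n, ArithmeticFunction.vonMangoldt k)
      =O[atTop] fun n => (n : ℝ) ^ (1 : ℝ) := by
    refine Asymptotics.IsBigO.of_bound 6 (Eventually.of_forall fun n => ?_)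
    have hle := chebyshevPsi_le n.cast_nonneg
    rw [hsum, Nat.floor_natCast] at hle
    rwa [norm_of_nonneg (Finset.sum_nonneg fun _ _ => ArithmeticFunction.vonMangoldt_nonneg),
      rpow_one, norm_of_nonneg n.cast_nonneg]
  have hL := LSeries_eq_mul_integral_of_nonneg (fun n => ArithmeticFunction.vonMangoldt n)
    zero_le_one hs hO fun _ => ArithmeticFunction.vonMangoldt_nonneg
  rw [ArithmeticFunction.LSeries_vonMangoldt_eq_deriv_riemannZeta_div hs] at hL
  rw [logDeriv_apply, ← neg_div, hL, mul_div_cancel_left₀ _ hs0]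
  refine setIntegral_congr_fun measurableSet_Ioi fun t _ => ?_
  simp only [hsum, Complex.ofReal_sum]

lemma logDeriv_riemannZeta₁ (hs : 1 < s.re) :
    logDeriv riemannZeta₁ s = 1 / (s - 1) + logDeriv riemannZeta s := by
  have hs1 : s ≠ 1 := by
    rintro rfl
    simp at hs
  have heq : riemannZeta₁ =ᶠ[𝓝 s] fun z => (z - 1) * riemannZeta z := by
    filter_upwards [isOpen_ne.mem_nhds hs1] with z hz using riemannZeta₁_eq_mul_riemannZeta hz
  rw [logDeriv_apply, heq.deriv_eq, heq.eq_of_nhds, ← logDeriv_apply,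
    logDeriv_mul (f := fun z => z - 1) s (sub_ne_zero.2 hs1) (riemannZeta_ne_zero_of_one_lt_re hs)
      (by fun_prop) (differentiableAt_riemannZeta hs1)]
  simp [logDeriv_apply]

lemma psiRemainder_mul_eq_sub (t : ℝ) (z : ℂ) :
    (psiRemainder t : ℂ) * z = (chebyshevPsi t : ℂ) * z - (t : ℂ) * z := by
  rw [psiRemainder, Complex.ofReal_sub, sub_mul]

lemma integrableOn_psiRemainder_mul_cpow (hs : 1 < s.re) :
    IntegrableOn (fun t : ℝ => (psiRemainder t : ℂ) * (t : ℂ) ^ (-(s + 1))) (Ioi 1) := by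
  simp_rw [psiRemainder_mul_eq_sub]
  exact (integrableOn_chebyshevPsi_mul_cpow hs).sub (integrableOn_ofReal_mul_cpow hs)

lemma integral_psiRemainder_mul_cpow (hs : 1 < s.re) :
    ∫ t in Ioi (1 : ℝ), (psiRemainder t : ℂ) * (t : ℂ) ^ (-(s + 1)) =
      psiRemainderTransform s := by
  have hs0 : s ≠ 0 := Complex.ne_zero_of_one_lt_re hs
  have hs1 : s - 1 ≠ 0 := by
    rw [sub_ne_zero]
    rintro rfl
    simp at hs
  simp_rw [psiRemainder_mul_eq_sub]
  rw [integral_sub (integrableOn_chebyshevPsi_mul_cpow hs) (integrableOn_ofReal_mul_cpow hs),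
    integral_chebyshevPsi_mul_cpow hs, integral_ofReal_mul_cpow hs, psiRemainderTransform,
    logDeriv_riemannZeta₁ hs]
  field_simp
  ring

lemma differentiableAt_psiRemainderTransform (hRH : RiemannHypothesis) (hs : 1 / 2 < s.re) :
    DifferentiableAt ℂ psiRemainderTransform s := by
  have hs0 : s ≠ 0 := by
    rintro rfl
    norm_num at hs
  have hzeta := differentiable_riemannZeta₁ s
  have hderiv := differentiable_riemannZeta₁.deriv s
  exact (((hderiv.div hzeta (riemannZeta₁_ne_zero hRH hs)).add_const 1).neg).div
    differentiableAt_id hs0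

lemma exists_norm_psiRemainderTransform_le (hRH : RiemannHypothesis) {a ε : ℝ} (ha : 0 < a)
    (hε : 0 < ε) :
    ∃ C, 0 < C ∧ ∀ s : ℂ, 1 / 2 + a ≤ s.re → s.re ≤ 2 →
      ‖psiRemainderTransform s‖ ≤ C * (1 + ‖s‖) ^ (ε - 1) := by
  obtain ⟨C, hC, hlog⟩ := exists_norm_logDeriv_riemannZeta₁_le hRH ha hε
  refine ⟨3 * (C + 1), by positivity, fun s hre hre2 => ?_⟩
  have hnorm : 1 / 2 ≤ ‖s‖ := by
    have := Complex.re_le_norm s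
    linarith
  have hone : 1 ≤ (1 + ‖s‖) ^ ε := one_le_rpow (by linarith) hε.le
  have hnum : ‖logDeriv riemannZeta₁ s + 1‖ ≤ (C + 1) * (1 + ‖s‖) ^ ε := by
    refine (norm_add_le _ _).trans ?_
    rw [norm_one, add_mul, one_mul]
    exact add_le_add (hlog s hre hre2) hone
  rw [psiRemainderTransform, norm_div, norm_neg, div_le_iff₀ (by linarith)]
  calc ‖logDeriv riemannZeta₁ s + 1‖ ≤ (C + 1) * (1 + ‖s‖) ^ ε := hnum
    _ = (C + 1) * (1 + ‖s‖) ^ (ε - 1) * (1 + ‖s‖) := by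
        rw [mul_assoc, ← rpow_add_one (by positivity), sub_add_cancel]
    _ ≤ (C + 1) * (1 + ‖s‖) ^ (ε - 1) * (3 * ‖s‖) := by
        gcongr
        linarith
    _ = 3 * (C + 1) * (1 + ‖s‖) ^ (ε - 1) * ‖s‖ := by ring

lemma exists_norm_psiRemainderTransform_div_le (hRH : RiemannHypothesis) {a : ℝ} (ha : 0 < a) :
    ∃ C, 0 < C ∧ ∀ s : ℂ, 1 / 2 + a ≤ s.re → s.re ≤ 2 →
      ‖psiRemainderTransform s / s‖ ≤ C * (1 + |s.im|) ^ (-(3 / 2) : ℝ) := by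
  obtain ⟨C, hC, hF⟩ := exists_norm_psiRemainderTransform_le hRH ha one_half_pos
  refine ⟨3 * C, by positivity, fun s hre hre2 => ?_⟩
  have hnorm : 1 / 2 ≤ ‖s‖ := by
    have := Complex.re_le_norm s
    linarith
  have hpow : (1 + ‖s‖) ^ (-(3 / 2) : ℝ) ≤ (1 + |s.im|) ^ (-(3 / 2) : ℝ) :=
    rpow_le_rpow_of_nonpos (by positivity) (by linarith [Complex.abs_im_le_norm s]) (by norm_num)
  rw [norm_div, div_le_iff₀ (by linarith)]
  calc ‖psiRemainderTransform s‖ ≤ C * (1 + ‖s‖) ^ (1 / 2 - 1 : ℝ) := hF s hre hre2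
    _ = C * (1 + ‖s‖) ^ (-(3 / 2) : ℝ) * (1 + ‖s‖) := by
        rw [mul_assoc, ← rpow_add_one (by positivity)]
        norm_num
    _ ≤ C * (1 + |s.im|) ^ (-(3 / 2) : ℝ) * (3 * ‖s‖) := by
        gcongr
        linarith
    _ = 3 * C * (1 + |s.im|) ^ (-(3 / 2) : ℝ) * ‖s‖ := by ring

end MellinTransform

section LaplaceTransform

variable {s : ℂ}

lemma exp_smul_mul_exp_cpow (z s : ℂ) (u : ℝ) :
    exp u • (z * (exp u : ℂ) ^ (-(s + 1))) = z * Complex.exp (-s * u) := by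
  rw [Complex.real_smul, Complex.cpow_def_of_ne_zero (mod_cast (exp_pos u).ne'),
    ← Complex.ofReal_log (exp_pos u).le, log_exp, Complex.ofReal_exp, mul_left_comm,
    ← Complex.exp_add]
  congr 2
  ring

lemma integral_Iio_mul_exp_eq_convolution (f : ℝ → ℂ) (s : ℂ) (u : ℝ) :
    convolution (fun t : ℝ => f t * Complex.exp (-s * t))
      ((Ioi 0).indicator fun t : ℝ => Complex.exp (-s * t)) (ContinuousLinearMap.mul ℂ ℂ) volume u =
      (∫ t in Iio u, f t) * Complex.exp (-s * u) := by
  rw [convolution_def, ← integral_indicator measurableSet_Iio, ← integral_mul_const]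
  refine integral_congr_ae (Eventually.of_forall fun t => ?_)
  by_cases htu : t < u
  · simp only [ContinuousLinearMap.mul_apply',
      indicator_of_mem (show t ∈ Iio u from htu),
      indicator_of_mem (show u - t ∈ Ioi (0 : ℝ) from sub_pos.2 htu), mul_assoc,
      ← Complex.exp_add]
    congr 2
    push_cast
    ring
  · simp only [ContinuousLinearMap.mul_apply',
      indicator_of_notMem (show t ∉ Iio u from htu),
      indicator_of_notMem (show u - t ∉ Ioi (0 : ℝ) from fun h => htu (sub_pos.1 h)), mul_zero,
      zero_mul]

lemma integrable_indicator_exp_mul_complex (hs : 0 < s.re) :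
    Integrable ((Ioi 0).indicator fun t : ℝ => Complex.exp (-s * t)) :=
  (integrable_indicator_iff measurableSet_Ioi).2
    (integrableOn_exp_mul_complex_Ioi (by simpa using hs) 0)

lemma integrable_primitive_mul_exp {f : ℝ → ℂ} (hs : 0 < s.re)
    (hf : Integrable fun t : ℝ => f t * Complex.exp (-s * t)) :
    Integrable fun u : ℝ => (∫ t in Iio u, f t) * Complex.exp (-s * u) :=
  (hf.integrable_convolution (ContinuousLinearMap.mul ℂ ℂ)
    (integrable_indicator_exp_mul_complex hs)).congr
    (Eventually.of_forall (integral_Iio_mul_exp_eq_convolution f s))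

lemma integral_primitive_mul_exp {f : ℝ → ℂ} (hs : 0 < s.re)
    (hf : Integrable fun t : ℝ => f t * Complex.exp (-s * t)) :
    ∫ u : ℝ, (∫ t in Iio u, f t) * Complex.exp (-s * u) =
      (∫ t : ℝ, f t * Complex.exp (-s * t)) / s := by
  simp_rw [← integral_Iio_mul_exp_eq_convolution f s]
  rw [integral_convolution (ContinuousLinearMap.mul ℂ ℂ) hf
      (integrable_indicator_exp_mul_complex hs), integral_indicator measurableSet_Ioi,
    integral_exp_mul_complex_Ioi (by simpa using hs)]
  simp [div_eq_mul_inv]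

/-- The remainder of `ψ` in the logarithmic variable, cut off below `x = 1` so that its two-sided
Laplace transform is the Mellin transform `psiRemainderTransform`. -/
noncomputable def logPsiRemainder : ℝ → ℝ := (Ioi 0).indicator fun u => psiRemainder (exp u)

lemma logPsiRemainder_of_pos {u : ℝ} (hu : 0 < u) : logPsiRemainder u = psiRemainder (exp u) :=
  indicator_of_mem (mem_Ioi.2 hu) _

lemma logPsiRemainder_of_nonpos {u : ℝ} (hu : u ≤ 0) : logPsiRemainder u = 0 :=
  indicator_of_notMem (notMem_Ioi.2 hu) _

lemma measurable_logPsiRemainder : Measurable logPsiRemainder :=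
  (measurable_psiRemainder.comp measurable_exp).indicator measurableSet_Ioi

lemma abs_logPsiRemainder_le (u : ℝ) : |logPsiRemainder u| ≤ 6 * exp u := by
  rcases le_or_gt u 0 with hu | hu
  · rw [logPsiRemainder_of_nonpos hu, abs_zero]
    positivity
  · rw [logPsiRemainder_of_pos hu]
    exact abs_psiRemainder_le (exp_pos u).le

lemma logPsiRemainder_mul_exp_eq_indicator (s : ℂ) :
    (fun u : ℝ => (logPsiRemainder u : ℂ) * Complex.exp (-s * u)) =
      (Ioi 0).indicator fun u : ℝ => (psiRemainder (exp u) : ℂ) * Complex.exp (-s * u) := by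
  ext u
  by_cases hu : u ∈ Ioi (0 : ℝ)
  · rw [indicator_of_mem hu, logPsiRemainder_of_pos hu]
  · rw [indicator_of_notMem hu, logPsiRemainder_of_nonpos (notMem_Ioi.1 hu), Complex.ofReal_zero,
      zero_mul]

lemma integrable_logPsiRemainder_mul_exp (hs : 1 < s.re) :
    Integrable fun u : ℝ => (logPsiRemainder u : ℂ) * Complex.exp (-s * u) := by
  have hiff := integrableOn_comp_exp_Ioi
    (fun t : ℝ => (psiRemainder t : ℂ) * (t : ℂ) ^ (-(s + 1))) 0
  simp only [exp_smul_mul_exp_cpow, exp_zero] at hiff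
  rw [logPsiRemainder_mul_exp_eq_indicator, integrable_indicator_iff measurableSet_Ioi]
  exact hiff.2 (integrableOn_psiRemainder_mul_cpow hs)

lemma integral_logPsiRemainder_mul_exp (hs : 1 < s.re) :
    ∫ u : ℝ, (logPsiRemainder u : ℂ) * Complex.exp (-s * u) = psiRemainderTransform s := by
  have heq := integral_comp_exp_Ioi
    (fun t : ℝ => (psiRemainder t : ℂ) * (t : ℂ) ^ (-(s + 1))) 0
  simp only [exp_smul_mul_exp_cpow, exp_zero] at heq
  rw [logPsiRemainder_mul_exp_eq_indicator, integral_indicator measurableSet_Ioi, heq,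
    integral_psiRemainder_mul_cpow hs]

lemma intervalIntegrable_logPsiRemainder (a b : ℝ) :
    IntervalIntegrable logPsiRemainder volume a b :=
  ((continuous_const.mul continuous_exp).intervalIntegrable a b).mono_fun'
    measurable_logPsiRemainder.aestronglyMeasurable (Eventually.of_forall abs_logPsiRemainder_le)

/-- The primitive of `logPsiRemainder` vanishing on the negative axis. Integrating once makes the
function continuous and its transform integrable on vertical lines, so that Fourier inversion
applies. -/
noncomputable def logPsiPrimitive (u : ℝ) : ℝ := ∫ t in (0 : ℝ)..u, logPsiRemainder t

lemma continuous_logPsiPrimitive : Continuous logPsiPrimitive :=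
  intervalIntegral.continuous_primitive intervalIntegrable_logPsiRemainder 0

lemma logPsiPrimitive_eq_integral_Iio (u : ℝ) :
    logPsiPrimitive u = ∫ t in Iio u, logPsiRemainder t := by
  have hIio : ∀ v ≤ (0 : ℝ), ∫ t in Iio v, logPsiRemainder t = 0 := fun v hv =>
    setIntegral_eq_zero_of_forall_eq_zero fun t ht =>
      logPsiRemainder_of_nonpos ((le_of_lt ht).trans hv)
  rcases le_or_gt 0 u with hu | hu
  · have hIic : IntegrableOn logPsiRemainder (Iic 0) :=
      integrableOn_zero.congr_fun (fun t ht => (logPsiRemainder_of_nonpos ht).symm)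
        measurableSet_Iic
    rw [logPsiPrimitive, intervalIntegral.integral_of_le hu, ← integral_Iic_eq_integral_Iio,
      ← Iic_union_Ioc_eq_Iic hu, setIntegral_union (Iic_disjoint_Ioc le_rfl) measurableSet_Ioc hIic
        (intervalIntegrable_logPsiRemainder 0 u).1, integral_Iic_eq_integral_Iio, hIio 0 le_rfl,
      zero_add]
  · rw [hIio u hu.le, logPsiPrimitive, intervalIntegral.integral_of_ge hu.le,
      setIntegral_eq_zero_of_forall_eq_zero fun t ht => logPsiRemainder_of_nonpos ht.2, neg_zero]

lemma ofReal_logPsiPrimitive (u : ℝ) :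
    (logPsiPrimitive u : ℂ) = ∫ t in Iio u, (logPsiRemainder t : ℂ) := by
  rw [logPsiPrimitive_eq_integral_Iio, integral_complex_ofReal]

lemma integrable_logPsiPrimitive_mul_exp (hs : 1 < s.re) :
    Integrable fun u : ℝ => (logPsiPrimitive u : ℂ) * Complex.exp (-s * u) := by
  simp_rw [ofReal_logPsiPrimitive]
  exact integrable_primitive_mul_exp (zero_lt_one.trans hs) (integrable_logPsiRemainder_mul_exp hs)

lemma integral_logPsiPrimitive_mul_exp (hs : 1 < s.re) :
    ∫ u : ℝ, (logPsiPrimitive u : ℂ) * Complex.exp (-s * u) = psiRemainderTransform s / s := by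
  simp_rw [ofReal_logPsiPrimitive]
  rw [integral_primitive_mul_exp (zero_lt_one.trans hs) (integrable_logPsiRemainder_mul_exp hs),
    integral_logPsiRemainder_mul_exp hs]

end LaplaceTransform

section Inversion

variable {a : ℝ}

lemma differentiableAt_psiRemainderTransform_div (hRH : RiemannHypothesis) {s : ℂ}
    (hs : 1 / 2 < s.re) : DifferentiableAt ℂ (fun z => psiRemainderTransform z / z) s := by
  refine (differentiableAt_psiRemainderTransform hRH hs).div differentiableAt_id ?_
  rintro rfl
  norm_num at hs

lemma integrable_psiRemainderTransform_div (hRH : RiemannHypothesis) (ha : 0 < a)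
    (ha' : a ≤ 3 / 2) :
    Integrable fun t : ℝ =>
      psiRemainderTransform (verticalPoint (1 / 2 + a) t) / verticalPoint (1 / 2 + a) t := by
  obtain ⟨C, -, hbound⟩ := exists_norm_psiRemainderTransform_div_le hRH ha
  refine integrable_comp_verticalPoint (K := fun z => psiRemainderTransform z / z) (r := 3 / 2)
    (C := C) (by norm_num) (fun t => ?_) fun t => ?_
  · exact (differentiableAt_psiRemainderTransform_div hRH (by simpa using ha)).continuousAt
  · exact hbound _ (by simp) (by rw [verticalPoint_re]; linarith)

open scoped FourierTransform in
lemma fourier_logPsiPrimitive_mul_exp (t : ℝ) :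
    𝓕 (fun u : ℝ => (logPsiPrimitive u : ℂ) * Complex.exp (-(2 * u : ℝ))) t =
      psiRemainderTransform (verticalPoint 2 t) / verticalPoint 2 t := by
  rw [fourier_real_eq_integral_exp_smul, ← integral_logPsiPrimitive_mul_exp (by simp)]
  refine integral_congr_ae (Eventually.of_forall fun v => ?_)
  simp only [smul_eq_mul, verticalPoint]
  rw [mul_left_comm, ← Complex.exp_add]
  congr 2
  push_cast
  ring

open scoped FourierTransform in
lemma logPsiPrimitive_eq_integral_verticalPoint_two (hRH : RiemannHypothesis) (u : ℝ) :
    (logPsiPrimitive u : ℂ) =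
      ∫ t, psiRemainderTransform (verticalPoint 2 t) / verticalPoint 2 t *
        Complex.exp (verticalPoint 2 t * u) := by
  have hcont : Continuous fun u : ℝ => (logPsiPrimitive u : ℂ) * Complex.exp (-(2 * u : ℝ)) := by
    have := continuous_logPsiPrimitive
    fun_prop
  have hInt : Integrable fun u : ℝ => (logPsiPrimitive u : ℂ) * Complex.exp (-(2 * u : ℝ)) := by
    simpa using integrable_logPsiPrimitive_mul_exp (s := 2) (by simp)
  have hFint : Integrable
      (𝓕 fun u : ℝ => (logPsiPrimitive u : ℂ) * Complex.exp (-(2 * u : ℝ))) := by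
    rw [funext fourier_logPsiPrimitive_mul_exp]
    have := integrable_psiRemainderTransform_div hRH (a := 3 / 2) (by norm_num) le_rfl
    rwa [show (1 / 2 + 3 / 2 : ℝ) = 2 by norm_num] at this
  have hinv := congrFun (hcont.fourierInv_fourier_eq hInt hFint) u
  rw [fourierInv_eq_integral_verticalPoint _ 2] at hinv
  simp_rw [fourier_logPsiPrimitive_mul_exp] at hinv
  exact (mul_right_cancel₀ (Complex.exp_ne_zero _) hinv).symm

lemma norm_mul_exp_mul_le {z s : ℂ} {B : ℝ} (hz : ‖z‖ ≤ B) (hs0 : 0 ≤ s.re) (hs2 : s.re ≤ 2)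
    (u : ℝ) : ‖z * Complex.exp (s * u)‖ ≤ B * exp (2 * |u|) := by
  have hre : s.re * u ≤ 2 * |u| :=
    (mul_le_mul_of_nonneg_left (le_abs_self u) hs0).trans
      (mul_le_mul_of_nonneg_right hs2 (abs_nonneg u))
  rw [norm_mul, Complex.norm_exp, Complex.re_mul_ofReal]
  exact mul_le_mul hz (exp_le_exp.2 hre) (exp_pos _).le ((norm_nonneg z).trans hz)

theorem logPsiPrimitive_eq_integral_verticalPoint (hRH : RiemannHypothesis) (ha : 0 < a)
    (ha' : a ≤ 3 / 2) (u : ℝ) :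
    (logPsiPrimitive u : ℂ) =
      ∫ t, psiRemainderTransform (verticalPoint (1 / 2 + a) t) / verticalPoint (1 / 2 + a) t *
        Complex.exp (verticalPoint (1 / 2 + a) t * u) := by
  obtain ⟨C, -, hbound⟩ := exists_norm_psiRemainderTransform_div_le hRH ha
  rw [logPsiPrimitive_eq_integral_verticalPoint_two hRH]
  refine (integral_comp_verticalPoint_eq (r := 3 / 2) (C := C * exp (2 * |u|))
    (K := fun s => psiRemainderTransform s / s * Complex.exp (s * u))
    (by norm_num) (by linarith) (fun s hs _ => ?_) fun s hs hs2 => ?_).symm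
  · exact (differentiableAt_psiRemainderTransform_div hRH (by linarith)).mul (by fun_prop)
  · rw [mul_right_comm]
    exact norm_mul_exp_mul_le (hbound s hs hs2) (by linarith) hs2 u

end Inversion

section SecondMoment

lemma norm_exp_sub_one_le {z : ℂ} (hz : 0 ≤ z.re) : ‖Complex.exp z - 1‖ ≤ exp z.re * ‖z‖ := by
  have hmean := (convex_halfSpace_re_le z.re).norm_image_sub_le_of_norm_deriv_le
    (f := Complex.exp) (C := exp z.re) (fun w _ => Complex.differentiableAt_exp)
    (fun w hw => by rw [Complex.deriv_exp, Complex.norm_exp]; exact exp_le_exp.2 hw)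
    (x := 0) (y := z) hz (le_refl z.re)
  simpa using hmean

lemma norm_exp_sub_one_le_two {z : ℂ} (hz : 0 ≤ z.re) : ‖Complex.exp z - 1‖ ≤ 2 * exp z.re := by
  refine (norm_sub_le _ _).trans ?_
  rw [Complex.norm_exp, norm_one, two_mul]
  gcongr
  exact one_le_exp hz

lemma norm_exp_sub_one_sq_le {z : ℂ} {r : ℝ} (hz : 0 ≤ z.re) (hr : 0 < r) (hr2 : r ≤ 2) :
    ‖Complex.exp z - 1‖ ^ 2 ≤ 4 * exp z.re ^ 2 * ‖z‖ ^ r := by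
  rcases le_or_gt 1 ‖z‖ with hge | hlt
  · calc ‖Complex.exp z - 1‖ ^ 2 ≤ (2 * exp z.re) ^ 2 := by
          gcongr
          exact norm_exp_sub_one_le_two hz
      _ = 4 * exp z.re ^ 2 * 1 := by ring
      _ ≤ 4 * exp z.re ^ 2 * ‖z‖ ^ r := by
          gcongr
          exact one_le_rpow hge hr.le
  · have hpow : ‖z‖ ^ 2 ≤ ‖z‖ ^ r := by
      rw [← rpow_natCast]
      exact rpow_le_rpow_of_exponent_ge' (norm_nonneg z) hlt.le hr.le (mod_cast hr2)
    calc ‖Complex.exp z - 1‖ ^ 2 ≤ (exp z.re * ‖z‖) ^ 2 := by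
          gcongr
          exact norm_exp_sub_one_le hz
      _ = 1 * exp z.re ^ 2 * ‖z‖ ^ 2 := by ring
      _ ≤ 4 * exp z.re ^ 2 * ‖z‖ ^ r := by
          gcongr
          norm_num

section

variable {E : Type*} [NormedAddCommGroup E] {g : ℝ → E} {w : ℝ → ℝ}

lemma memLp_two_of_norm_sq_le (hg : AEStronglyMeasurable g) (hw : Integrable w)
    (hgw : ∀ t, ‖g t‖ ^ 2 ≤ w t) : MemLp g 2 :=
  (memLp_two_iff_integrable_sq_norm hg).2 <| hw.mono' (hg.norm.pow 2) <|
    Eventually.of_forall fun t => by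
      rw [norm_of_nonneg (sq_nonneg _)]
      exact hgw t

lemma lintegral_enorm_sq_le_of_norm_sq_le (hw : Integrable w) (hgw : ∀ t, ‖g t‖ ^ 2 ≤ w t) :
    ∫⁻ t, ‖g t‖ₑ ^ 2 ≤ ENNReal.ofReal (∫ t, w t) := by
  rw [ofReal_integral_eq_lintegral_ofReal hw
    (Eventually.of_forall fun t => (sq_nonneg _).trans (hgw t))]
  refine lintegral_mono fun t => ?_
  rw [← ofReal_norm, ← ENNReal.ofReal_pow (norm_nonneg _)]
  exact ENNReal.ofReal_le_ofReal (hgw t)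

end

/-- The transform of the second difference of `logPsiPrimitive` with steps `κ` and `l`, divided
by `l`; letting `l → 0` recovers the first difference of `logPsiRemainder`. -/
noncomputable def secondDiffTransform (κ l : ℝ) (s : ℂ) : ℂ :=
  psiRemainderTransform s / s * (Complex.exp (κ * s) - 1) * (Complex.exp (l * s) - 1) / l

variable {κ l : ℝ}

lemma secondDiffTransform_mul_exp (κ l u : ℝ) (s : ℂ) :
    secondDiffTransform κ l s * Complex.exp (s * u) =
      ((psiRemainderTransform s / s * Complex.exp (s * (u + l + κ : ℝ)) -
        psiRemainderTransform s / s * Complex.exp (s * (u + l : ℝ))) -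
      (psiRemainderTransform s / s * Complex.exp (s * (u + κ : ℝ)) -
        psiRemainderTransform s / s * Complex.exp (s * u))) / l := by
  rw [secondDiffTransform,
    show s * ((u + l + κ : ℝ) : ℂ) = κ * s + l * s + s * u by push_cast; ring,
    show s * ((u + κ : ℝ) : ℂ) = κ * s + s * u by push_cast; ring,
    show s * ((u + l : ℝ) : ℂ) = l * s + s * u by push_cast; ring]
  simp only [Complex.exp_add]
  ring

variable {a : ℝ}

lemma integrable_psiRemainderTransform_div_mul_exp (hRH : RiemannHypothesis) (ha : 0 < a)
    (ha' : a ≤ 3 / 2) (u : ℝ) :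
    Integrable fun t : ℝ =>
      psiRemainderTransform (verticalPoint (1 / 2 + a) t) / verticalPoint (1 / 2 + a) t *
        Complex.exp (verticalPoint (1 / 2 + a) t * u) := by
  refine (integrable_psiRemainderTransform_div hRH ha ha').mul_bdd (c := exp ((1 / 2 + a) * u)) ?_
    (Eventually.of_forall fun t => ?_)
  · have := continuous_verticalPoint (1 / 2 + a)
    exact Continuous.aestronglyMeasurable (by fun_prop)
  · rw [Complex.norm_exp, Complex.re_mul_ofReal, verticalPoint_re]

lemma integral_secondDiffTransform_mul_exp (hRH : RiemannHypothesis) (ha : 0 < a)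
    (ha' : a ≤ 3 / 2) (κ l u : ℝ) :
    ∫ t, secondDiffTransform κ l (verticalPoint (1 / 2 + a) t) *
        Complex.exp (verticalPoint (1 / 2 + a) t * u) =
      ((((logPsiPrimitive (u + l + κ) - logPsiPrimitive (u + l)) -
        (logPsiPrimitive (u + κ) - logPsiPrimitive u)) / l : ℝ) : ℂ) := by
  have hInt := integrable_psiRemainderTransform_div_mul_exp hRH ha ha'
  have hsub (v w : ℝ) : Integrable fun t : ℝ =>
      psiRemainderTransform (verticalPoint (1 / 2 + a) t) / verticalPoint (1 / 2 + a) t *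
        Complex.exp (verticalPoint (1 / 2 + a) t * v) -
      psiRemainderTransform (verticalPoint (1 / 2 + a) t) / verticalPoint (1 / 2 + a) t *
        Complex.exp (verticalPoint (1 / 2 + a) t * w) := (hInt v).sub (hInt w)
  simp_rw [secondDiffTransform_mul_exp]
  rw [integral_div, integral_sub (hsub _ _) (hsub _ _), integral_sub (hInt _) (hInt _),
    integral_sub (hInt _) (hInt _)]
  push_cast
  simp only [logPsiPrimitive_eq_integral_verticalPoint hRH ha ha', Complex.ofReal_add]

lemma integrable_secondDiffTransform (hRH : RiemannHypothesis) (ha : 0 < a) (ha' : a ≤ 3 / 2)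
    (κ l : ℝ) : Integrable fun t => secondDiffTransform κ l (verticalPoint (1 / 2 + a) t) := by
  have hInt := integrable_psiRemainderTransform_div_mul_exp hRH ha ha'
  refine ((((hInt (0 + l + κ)).sub (hInt (0 + l))).sub
    ((hInt (0 + κ)).sub (hInt 0))).div_const (l : ℂ)).congr (Eventually.of_forall fun t => ?_)
  have hexp := secondDiffTransform_mul_exp κ l 0 (verticalPoint (1 / 2 + a) t)
  simp only [Complex.ofReal_zero, mul_zero, Complex.exp_zero, mul_one] at hexp
  simp only [hexp, Pi.sub_apply, Complex.ofReal_zero, mul_zero, Complex.exp_zero, mul_one]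

lemma norm_secondDiffTransform_le {s : ℂ} (hs : 0 < s.re) (hl : 0 < l) :
    ‖secondDiffTransform κ l s‖ ≤
      ‖psiRemainderTransform s‖ * ‖Complex.exp (κ * s) - 1‖ * exp (l * s.re) := by
  have hnorm : 0 < ‖s‖ := hs.trans_le (Complex.re_le_norm s)
  have hexp := norm_exp_sub_one_le (z := l * s)
    (by rw [Complex.re_ofReal_mul]; positivity)
  rw [Complex.re_ofReal_mul, norm_mul, Complex.norm_of_nonneg hl.le] at hexp
  rw [secondDiffTransform, norm_div, norm_mul, norm_mul, norm_div, Complex.norm_of_nonneg hl.le,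
    div_le_iff₀ hl]
  calc ‖psiRemainderTransform s‖ / ‖s‖ * ‖Complex.exp (κ * s) - 1‖ * ‖Complex.exp (l * s) - 1‖
      ≤ ‖psiRemainderTransform s‖ / ‖s‖ * ‖Complex.exp (κ * s) - 1‖ *
          (exp (l * s.re) * (l * ‖s‖)) := by gcongr
    _ = ‖psiRemainderTransform s‖ * ‖Complex.exp (κ * s) - 1‖ * exp (l * s.re) * l := by
        field_simp

lemma exists_norm_secondDiffTransform_sq_le (hRH : RiemannHypothesis) {ε : ℝ} (hε : 0 < ε)
    (hε1 : ε < 1) :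
    ∃ C, 0 < C ∧ ∀ κ l, 0 < κ → 0 < l → l ≤ 1 → ∀ s : ℂ, s.re = 1 / 2 + ε / 2 →
      ‖secondDiffTransform κ l s‖ ^ 2 ≤
        C * κ ^ (1 - ε) * exp ((1 + ε) * κ) * (1 + ‖s‖) ^ (-(1 + ε / 2)) := by
  obtain ⟨C, hC, hF⟩ := exists_norm_psiRemainderTransform_le hRH (half_pos hε)
    (show 0 < ε / 4 by positivity)
  refine ⟨4 * C ^ 2 * exp (1 + ε), by positivity, fun κ l hκ hl hl1 s hs => ?_⟩
  have hs0 : 0 < s.re := by linarith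
  have hκs : ‖Complex.exp (κ * s) - 1‖ ^ 2 ≤
      4 * exp ((1 + ε) * κ) * (κ ^ (1 - ε) * (1 + ‖s‖) ^ (1 - ε)) := by
    have hsq := norm_exp_sub_one_sq_le (z := κ * s) (r := 1 - ε)
      (by rw [Complex.re_ofReal_mul]; positivity) (by linarith) (by linarith)
    rw [Complex.re_ofReal_mul, norm_mul, Complex.norm_of_nonneg hκ.le, ← exp_nat_mul, hs,
      show ((2 : ℕ) : ℝ) * (κ * (1 / 2 + ε / 2)) = (1 + ε) * κ by push_cast; ring] at hsq
    rw [← mul_rpow hκ.le (by positivity)]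
    refine hsq.trans ?_
    gcongr
    linarith
  have hls : exp (l * s.re) ^ 2 ≤ exp (1 + ε) := by
    rw [← exp_nat_mul, exp_le_exp, hs]
    push_cast
    nlinarith
  calc ‖secondDiffTransform κ l s‖ ^ 2
      ≤ (‖psiRemainderTransform s‖ * ‖Complex.exp (κ * s) - 1‖ * exp (l * s.re)) ^ 2 := by
        gcongr
        exact norm_secondDiffTransform_le hs0 hl
    _ = ‖psiRemainderTransform s‖ ^ 2 * ‖Complex.exp (κ * s) - 1‖ ^ 2 * exp (l * s.re) ^ 2 := by
        ring
    _ ≤ (C * (1 + ‖s‖) ^ (ε / 4 - 1)) ^ 2 *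
          (4 * exp ((1 + ε) * κ) * (κ ^ (1 - ε) * (1 + ‖s‖) ^ (1 - ε))) * exp (1 + ε) := by
        gcongr
        exact hF s hs.ge (by linarith)
    _ = 4 * C ^ 2 * exp (1 + ε) * κ ^ (1 - ε) * exp ((1 + ε) * κ) *
          (((1 + ‖s‖) ^ (ε / 4 - 1)) ^ 2 * (1 + ‖s‖) ^ (1 - ε)) := by ring
    _ = 4 * C ^ 2 * exp (1 + ε) * κ ^ (1 - ε) * exp ((1 + ε) * κ) *
          (1 + ‖s‖) ^ (-(1 + ε / 2)) := by
        rw [← rpow_mul_natCast (by positivity), ← rpow_add (by positivity)]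
        congr 2
        push_cast
        ring

lemma exists_lintegral_secondDiffTransform_sq_le (hRH : RiemannHypothesis) {ε : ℝ} (hε : 0 < ε)
    (hε1 : ε < 1) :
    ∃ C, 0 < C ∧ ∀ κ l, 0 < κ → 0 < l → l ≤ 1 →
      MemLp (fun t => secondDiffTransform κ l (verticalPoint (1 / 2 + ε / 2) t)) 2 ∧
      ∫⁻ t, ‖secondDiffTransform κ l (verticalPoint (1 / 2 + ε / 2) t)‖ₑ ^ 2 ≤
        ENNReal.ofReal (C * κ ^ (1 - ε) * exp ((1 + ε) * κ)) := by
  obtain ⟨C, hC, hbound⟩ := exists_norm_secondDiffTransform_sq_le hRH hε hε1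
  have hdecay : Integrable fun t : ℝ => (1 + ‖t‖) ^ (-(1 + ε / 2)) :=
    integrable_one_add_norm (by rw [Module.finrank_self]; push_cast; linarith)
  refine ⟨C * ((∫ t : ℝ, (1 + ‖t‖) ^ (-(1 + ε / 2))) + 1), by positivity,
    fun κ l hκ hl hl1 => ?_⟩
  have hpoint (t : ℝ) : ‖secondDiffTransform κ l (verticalPoint (1 / 2 + ε / 2) t)‖ ^ 2 ≤
      C * κ ^ (1 - ε) * exp ((1 + ε) * κ) * (1 + ‖t‖) ^ (-(1 + ε / 2)) := by
    refine (hbound κ l hκ hl hl1 _ (verticalPoint_re _ t)).trans ?_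
    gcongr ?_ * ?_
    refine rpow_le_rpow_of_nonpos (by positivity) (add_le_add_right ?_ 1) (by linarith)
    exact (abs_le_abs_im_verticalPoint _ t).trans (Complex.abs_im_le_norm _)
  have hmeas := (integrable_secondDiffTransform hRH (half_pos hε) (by linarith) κ
    l).aestronglyMeasurable
  have hInt := hdecay.const_mul (C * κ ^ (1 - ε) * exp ((1 + ε) * κ))
  refine ⟨memLp_two_of_norm_sq_le hmeas hInt hpoint,
    (lintegral_enorm_sq_le_of_norm_sq_le hInt hpoint).trans (ENNReal.ofReal_le_ofReal ?_)⟩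
  calc ∫ t : ℝ, C * κ ^ (1 - ε) * exp ((1 + ε) * κ) * (1 + ‖t‖) ^ (-(1 + ε / 2))
      = C * (∫ t : ℝ, (1 + ‖t‖) ^ (-(1 + ε / 2))) * κ ^ (1 - ε) * exp ((1 + ε) * κ) := by
        rw [integral_const_mul]
        ring
    _ ≤ C * ((∫ t : ℝ, (1 + ‖t‖) ^ (-(1 + ε / 2))) + 1) * κ ^ (1 - ε) *
          exp ((1 + ε) * κ) := by
        gcongr
        linarith

lemma exists_lintegral_secondDiff_sq_le (hRH : RiemannHypothesis) {ε : ℝ} (hε : 0 < ε)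
    (hε1 : ε < 1) :
    ∃ C, 0 < C ∧ ∀ κ l, 0 < κ → 0 < l → l ≤ 1 →
      ∫⁻ u, ENNReal.ofReal ((((logPsiPrimitive (u + l + κ) - logPsiPrimitive (u + l)) -
          (logPsiPrimitive (u + κ) - logPsiPrimitive u)) / l) ^ 2 * exp (-(1 + ε) * u)) ≤
        ENNReal.ofReal (C * κ ^ (1 - ε) * exp ((1 + ε) * κ)) := by
  obtain ⟨C, hC, hbound⟩ := exists_lintegral_secondDiffTransform_sq_le hRH hε hε1
  refine ⟨C, hC, fun κ l hκ hl hl1 => ?_⟩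
  obtain ⟨hmem, hle⟩ := hbound κ l hκ hl hl1
  refine le_of_eq_of_le ?_ hle
  rw [← lintegral_enorm_integral_verticalPoint_sq
    (integrable_secondDiffTransform hRH (half_pos hε) (by linarith) κ l) hmem (1 / 2 + ε / 2)]
  refine lintegral_congr fun u => ?_
  rw [integral_secondDiffTransform_mul_exp hRH (half_pos hε) (by linarith), ← ofReal_norm,
    ← ENNReal.ofReal_pow (norm_nonneg _), ← ENNReal.ofReal_mul (sq_nonneg _), Complex.norm_real,
    norm_eq_abs, sq_abs]
  ring_nf

lemma ae_hasDerivAt_logPsiPrimitive :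
    ∀ᵐ u : ℝ, 0 < u → HasDerivAt logPsiPrimitive (logPsiRemainder u) u := by
  have hcountable := (monotone_chebyshevPsi.comp exp_monotone).countable_not_continuousAt
  filter_upwards [hcountable.ae_notMem volume] with u hu hu0
  have hcont : ContinuousAt logPsiRemainder u := by
    refine ((not_not.1 hu).sub continuous_exp.continuousAt).congr ?_
    filter_upwards [Ioi_mem_nhds hu0] with v hv
    exact (logPsiRemainder_of_pos hv).symm
  exact intervalIntegral.integral_hasDerivAt_right (intervalIntegrable_logPsiRemainder 0 u)
    measurable_logPsiRemainder.stronglyMeasurable.stronglyMeasurableAtFilter hcont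

lemma exists_lintegral_logPsiRemainder_sub_sq_le (hRH : RiemannHypothesis) {ε : ℝ} (hε : 0 < ε)
    (hε1 : ε < 1) :
    ∃ C, 0 < C ∧ ∀ κ, 0 < κ →
      ∫⁻ u in Ioi (0 : ℝ), ENNReal.ofReal
          ((logPsiRemainder (u + κ) - logPsiRemainder u) ^ 2 * exp (-(1 + ε) * u)) ≤
        ENNReal.ofReal (C * κ ^ (1 - ε) * exp ((1 + ε) * κ)) := by
  obtain ⟨C, hC, hbound⟩ := exists_lintegral_secondDiff_sq_le hRH hε hε1
  refine ⟨C, hC, fun κ hκ => setLIntegral_deriv_sq_mul_le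
    (f := fun u => logPsiPrimitive (u + κ) - logPsiPrimitive u) measurableSet_Ioi ?_
    (by fun_prop) ?_ fun l hl hl1 => hbound κ l hκ hl hl1⟩
  · have := continuous_logPsiPrimitive
    fun_prop
  · have hshift : ∀ᵐ u : ℝ, 0 < u + κ →
        HasDerivAt logPsiPrimitive (logPsiRemainder (u + κ)) (u + κ) :=
      (quasiMeasurePreserving_add_right volume κ).ae ae_hasDerivAt_logPsiPrimitive
    filter_upwards [ae_hasDerivAt_logPsiPrimitive, hshift] with u hu huκ hu0
    exact ((huκ (add_pos hu0 hκ)).comp_add_const u κ).sub (hu hu0)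

theorem exists_lintegral_psiRemainder_sub_sq_le (hRH : RiemannHypothesis) {ε : ℝ} (hε : 0 < ε)
    (hε1 : ε < 1) :
    ∃ C, 0 < C ∧ ∀ δ, 0 < δ →
      ∫⁻ x in Ioi (1 : ℝ), ENNReal.ofReal
          ((psiRemainder (x + δ * x) - psiRemainder x) ^ 2 * x ^ (-(2 + ε))) ≤
        ENNReal.ofReal (C * δ ^ (1 - ε) * (1 + δ) ^ (1 + ε)) := by
  obtain ⟨C, hC, hbound⟩ := exists_lintegral_logPsiRemainder_sub_sq_le hRH hε hε1
  refine ⟨C, hC, fun δ hδ => ?_⟩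
  have hlog0 : 0 < log (1 + δ) := log_pos (by linarith)
  have hlog : log (1 + δ) ≤ δ := (log_le_sub_one_of_pos (by linarith)).trans (by linarith)
  have hsubst (u : ℝ) (hu : u ∈ Ioi (0 : ℝ)) :
      ENNReal.ofReal |exp u| * ENNReal.ofReal
        ((psiRemainder (exp u + δ * exp u) - psiRemainder (exp u)) ^ 2 * exp u ^ (-(2 + ε))) =
      ENNReal.ofReal ((logPsiRemainder (u + log (1 + δ)) - logPsiRemainder u) ^ 2 *
        exp (-(1 + ε) * u)) := by
    rw [← ENNReal.ofReal_mul (abs_nonneg _), logPsiRemainder_of_pos hu,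
      logPsiRemainder_of_pos (add_pos hu hlog0), exp_add, exp_log (by linarith),
      abs_of_pos (exp_pos u), ← exp_mul, mul_left_comm, ← exp_add]
    ring_nf
  have himage : exp '' Ioi 0 = Ioi 1 := by rw [image_exp_Ioi, exp_zero]
  rw [← himage, lintegral_image_eq_lintegral_abs_deriv_mul measurableSet_Ioi
      (fun u _ => (hasDerivAt_exp u).hasDerivWithinAt) exp_injective.injOn,
    setLIntegral_congr_fun measurableSet_Ioi hsubst]
  refine (hbound _ hlog0).trans (ENNReal.ofReal_le_ofReal ?_)
  rw [mul_comm (1 + ε), ← rpow_def_of_pos (by linarith)]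
  gcongr

end SecondMoment

section Increments

/-- The squared deviation `(ψ(x+v) - ψ(x) - v)²`, the common integrand of `zetaVarDelta` (with
`v = δx`) and `zetaVarH` (with `v = h`). -/
noncomputable def incrementSq (x v : ℝ) : ℝ := (psiRemainder (x + v) - psiRemainder x) ^ 2

lemma incrementSq_nonneg (x v : ℝ) : 0 ≤ incrementSq x v := sq_nonneg _

lemma measurable_incrementSq {α : Type*} [MeasurableSpace α] {f g : α → ℝ}
    (hf : Measurable f) (hg : Measurable g) : Measurable fun x => incrementSq (f x) (g x) :=
  ((measurable_psiRemainder.comp (hf.add hg)).sub (measurable_psiRemainder.comp hf)).pow_const 2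

lemma incrementSq_le {x v X V : ℝ} (hx : 0 ≤ x) (hxX : x ≤ X) (hv : 0 ≤ v) (hvV : v ≤ V) :
    incrementSq x v ≤ (12 * (X + V)) ^ 2 := by
  have hend := abs_psiRemainder_le (add_nonneg hx hv)
  have hstart := abs_psiRemainder_le hx
  rw [incrementSq, ← sq_abs]
  gcongr
  exact (abs_sub _ _).trans (by linarith)

lemma incrementSq_le_add (x h v : ℝ) :
    incrementSq x h ≤ 2 * incrementSq x v + 2 * incrementSq (x + h) (v - h) := by
  unfold incrementSq
  rw [show x + h + (v - h) = x + v by ring]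
  nlinarith [sq_nonneg ((psiRemainder (x + v) - psiRemainder x) +
    (psiRemainder (x + v) - psiRemainder (x + h)))]

lemma integrableOn_incrementSq {a b v : ℝ} (ha : 0 ≤ a) (hv : 0 ≤ v) :
    IntegrableOn (fun x => incrementSq x v) (Ioo a b) := by
  refine Measure.integrableOn_of_bounded (M := (12 * (b + v)) ^ 2) (by simp)
    (measurable_incrementSq measurable_id measurable_const).aestronglyMeasurable ?_
  filter_upwards [ae_restrict_mem measurableSet_Ioo] with x hx
  rw [norm_of_nonneg (incrementSq_nonneg _ _)]
  exact incrementSq_le (ha.trans hx.1.le) hx.2.le hv le_rfl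

end Increments

section ChangeOfVariables

lemma setLIntegral_Ioo_comp_add_right (f : ℝ → ENNReal) (a b h : ℝ) :
    ∫⁻ x in Ioo a b, f (x + h) = ∫⁻ y in Ioo (a + h) (b + h), f y := by
  rw [← (measurePreserving_add_right volume h).setLIntegral_comp_preimage_emb
    (measurableEmbedding_addRight h) f, preimage_add_const_Ioo, add_sub_cancel_right,
    add_sub_cancel_right]

lemma setLIntegral_Ioo_comp_mul_left (f : ℝ → ENNReal) {c : ℝ} (hc : 0 < c) (a b : ℝ) :
    ∫⁻ w in Ioo a b, f w = ∫⁻ δ in Ioo (a / c) (b / c), ENNReal.ofReal c * f (c * δ) := by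
  have himage : (c * ·) '' Ioo (a / c) (b / c) = Ioo a b := by
    rw [image_mul_left_Ioo hc, mul_div_cancel₀ _ hc.ne', mul_div_cancel₀ _ hc.ne']
  rw [← himage, lintegral_image_eq_lintegral_abs_deriv_mul measurableSet_Ioo (f' := fun _ => c)
    (fun x _ => by simpa using ((hasDerivAt_id x).const_mul c).hasDerivWithinAt)
    (mul_right_injective₀ hc.ne').injOn, abs_of_pos hc]

lemma setLIntegral_Ioo_rpow_sub_one {r H : ℝ} (hr : 0 < r) (hH : 0 ≤ H) :
    ∫⁻ δ in Ioo 0 H, ENNReal.ofReal (δ ^ (r - 1)) = ENNReal.ofReal (H ^ r / r) := by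
  have hInt : IntegrableOn (fun δ : ℝ => δ ^ (r - 1)) (Ioo 0 H) :=
    (intervalIntegrable_iff_integrableOn_Ioo_of_le hH).1
      (intervalIntegral.intervalIntegrable_rpow' (by linarith))
  rw [← ofReal_integral_eq_lintegral_ofReal hInt ((ae_restrict_iff' measurableSet_Ioo).2
      (Eventually.of_forall fun δ hδ => rpow_nonneg hδ.1.le _)), ← integral_Ioc_eq_integral_Ioo,
    ← intervalIntegral.integral_of_le hH, integral_rpow (Or.inl (by linarith)), sub_add_cancel,
    zero_rpow hr.ne', sub_zero]

end ChangeOfVariables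

section ShortIncrementMoments

variable {ε : ℝ}

lemma rpow_two_sub_le_mul_self {h : ℝ} (hh : 1 ≤ h) (hε : 0 ≤ ε) : h ^ (2 - ε) ≤ h * h :=
  calc h ^ (2 - ε) ≤ h ^ (2 : ℝ) := rpow_le_rpow_of_exponent_le hh (by linarith)
    _ = h * h := by rw [rpow_two, sq]

lemma le_scaled_rpow_mul_rpow_neg {y δ H Y : ℝ} (hε : 0 < ε) (hε1 : ε < 1) (hH : H ≤ Y)
    (hy : 0 < y) (hyY : y ≤ Y) (hδ : 0 < δ) (hyδ : y * δ ≤ H) :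
    y ≤ (2 * Y) ^ (1 + ε) * Y ^ (2 * ε) * H ^ (2 - 2 * ε) *
      (δ ^ (-(2 - 2 * ε)) * (1 + δ) ^ (-(1 + ε))) * y ^ (-(2 + ε)) := by
  have hH0 : 0 < H := (mul_pos hy hδ).trans_le hyδ
  have hY0 : 0 < Y := hH0.trans_le hH
  have hone : y ^ (1 + ε) ≤ (2 * Y) ^ (1 + ε) * (1 + δ) ^ (-(1 + ε)) := by
    rw [rpow_neg (by positivity), ← div_eq_mul_inv, le_div_iff₀ (by positivity),
      ← mul_rpow hy.le (by positivity)]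
    exact rpow_le_rpow (by positivity) (by nlinarith) (by linarith)
  have htwo : y ^ (2 - 2 * ε) ≤ H ^ (2 - 2 * ε) * δ ^ (-(2 - 2 * ε)) := by
    rw [rpow_neg hδ.le, ← div_eq_mul_inv, le_div_iff₀ (by positivity), ← mul_rpow hy.le hδ.le]
    exact rpow_le_rpow (by positivity) hyδ (by linarith)
  calc y = y ^ (1 + ε) * y ^ (2 * ε) * y ^ (2 - 2 * ε) * y ^ (-(2 + ε)) := by
        rw [← rpow_add hy, ← rpow_add hy, ← rpow_add hy]
        ring_nf
        rw [rpow_one]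
    _ ≤ (2 * Y) ^ (1 + ε) * (1 + δ) ^ (-(1 + ε)) * Y ^ (2 * ε) *
          (H ^ (2 - 2 * ε) * δ ^ (-(2 - 2 * ε))) * y ^ (-(2 + ε)) := by gcongr
    _ = (2 * Y) ^ (1 + ε) * Y ^ (2 * ε) * H ^ (2 - 2 * ε) *
          (δ ^ (-(2 - 2 * ε)) * (1 + δ) ^ (-(1 + ε))) * y ^ (-(2 + ε)) := by ring

lemma setLIntegral_incrementSq_le {y H Y : ℝ} (hε : 0 < ε) (hε1 : ε < 1) (hH : 0 < H)
    (hHY : H ≤ Y) (hy : 1 ≤ y) (hyY : y ≤ Y) :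
    ∫⁻ w in Ioo 0 H, ENNReal.ofReal (incrementSq y w) ≤
      ∫⁻ δ in Ioo 0 H, ENNReal.ofReal ((2 * Y) ^ (1 + ε) * Y ^ (2 * ε) * H ^ (2 - 2 * ε) *
          (δ ^ (-(2 - 2 * ε)) * (1 + δ) ^ (-(1 + ε)))) *
        ENNReal.ofReal ((psiRemainder (y + δ * y) - psiRemainder y) ^ 2 * y ^ (-(2 + ε))) := by
  have hy0 : 0 < y := zero_lt_one.trans_le hy
  rw [setLIntegral_Ioo_comp_mul_left _ hy0, zero_div]
  refine le_trans ?_ (lintegral_mono_set (Ioo_subset_Ioo_right (div_le_self hH.le hy)))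
  refine setLIntegral_mono_ae' measurableSet_Ioo (Eventually.of_forall fun δ hδ => ?_)
  have hδ0 : 0 < δ := hδ.1
  have hY0 : 0 < Y := hH.trans_le hHY
  have hyδ : y * δ ≤ H := by
    rw [mul_comm]
    exact ((lt_div_iff₀ hy0).1 hδ.2).le
  rw [← ENNReal.ofReal_mul hy0.le, ← ENNReal.ofReal_mul (by positivity), mul_comm δ y,
    mul_comm (_ ^ 2), ← mul_assoc]
  exact ENNReal.ofReal_le_ofReal (mul_le_mul_of_nonneg_right
    (le_scaled_rpow_mul_rpow_neg hε hε1 hHY hy0 hyY hδ0 hyδ) (sq_nonneg _))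

lemma ofReal_weight_mul_moment {A C δ : ℝ} (hA : 0 ≤ A) (hC : 0 ≤ C) (hδ : 0 < δ) :
    ENNReal.ofReal (A * (δ ^ (-(2 - 2 * ε)) * (1 + δ) ^ (-(1 + ε)))) *
      ENNReal.ofReal (C * δ ^ (1 - ε) * (1 + δ) ^ (1 + ε)) =
    ENNReal.ofReal (A * C) * ENNReal.ofReal (δ ^ (ε - 1)) := by
  rw [← ENNReal.ofReal_mul (by positivity), ← ENNReal.ofReal_mul (by positivity),
    show ε - 1 = -(2 - 2 * ε) + (1 - ε) by ring, rpow_add hδ, rpow_neg (by positivity : 0 ≤ 1 + δ)]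
  congr 1
  field_simp

lemma weight_mul_rpow_div (C : ℝ) {Y H : ℝ} (hY : 0 < Y) (hH : 0 < H) :
    (2 * Y) ^ (1 + ε) * Y ^ (2 * ε) * H ^ (2 - 2 * ε) * C * (H ^ ε / ε) =
      2 ^ (1 + ε) * C / ε * Y ^ (1 + 3 * ε) * H ^ (2 - ε) := by
  have hYpow : Y ^ (1 + 3 * ε) = Y ^ (1 + ε) * Y ^ (2 * ε) := by
    rw [← rpow_add hY]
    ring_nf
  have hHpow : H ^ (2 - ε) = H ^ (2 - 2 * ε) * H ^ ε := by
    rw [← rpow_add hH]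
    ring_nf
  rw [mul_rpow zero_le_two hY.le, hYpow, hHpow]
  ring

theorem exists_lintegral_lintegral_incrementSq_le (hRH : RiemannHypothesis) (hε : 0 < ε)
    (hε1 : ε < 1) :
    ∃ C, 0 < C ∧ ∀ Y H : ℝ, 0 < H → H ≤ Y →
      ∫⁻ y in Ioo 1 Y, ∫⁻ w in Ioo 0 H, ENNReal.ofReal (incrementSq y w) ≤
        ENNReal.ofReal (C * Y ^ (1 + 3 * ε) * H ^ (2 - ε)) := by
  obtain ⟨C, hC, hmoment⟩ := exists_lintegral_psiRemainder_sub_sq_le hRH hε hε1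
  refine ⟨2 ^ (1 + ε) * C / ε, by positivity, fun Y H hH hHY => ?_⟩
  have hY0 : 0 < Y := hH.trans_le hHY
  set A := (2 * Y) ^ (1 + ε) * Y ^ (2 * ε) * H ^ (2 - 2 * ε) with hA
  have hmeas : Measurable fun p : ℝ × ℝ =>
      ENNReal.ofReal (A * (p.2 ^ (-(2 - 2 * ε)) * (1 + p.2) ^ (-(1 + ε)))) *
      ENNReal.ofReal ((psiRemainder (p.1 + p.2 * p.1) - psiRemainder p.1) ^ 2 *
        p.1 ^ (-(2 + ε))) := by
    have := measurable_psiRemainder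
    fun_prop
  have hslice (δ : ℝ) (hδ : δ ∈ Ioo 0 H) :
      ∫⁻ y in Ioo 1 Y, ENNReal.ofReal (A * (δ ^ (-(2 - 2 * ε)) * (1 + δ) ^ (-(1 + ε)))) *
        ENNReal.ofReal ((psiRemainder (y + δ * y) - psiRemainder y) ^ 2 * y ^ (-(2 + ε))) ≤
      ENNReal.ofReal (A * C) * ENNReal.ofReal (δ ^ (ε - 1)) := by
    rw [lintegral_const_mul' _ _ ENNReal.ofReal_ne_top]
    refine (mul_le_mul_right
      ((lintegral_mono_set Ioo_subset_Ioi_self).trans (hmoment δ hδ.1)) _).trans_eq ?_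
    exact ofReal_weight_mul_moment (by positivity) hC.le hδ.1
  calc ∫⁻ y in Ioo 1 Y, ∫⁻ w in Ioo 0 H, ENNReal.ofReal (incrementSq y w)
      ≤ ∫⁻ δ in Ioo 0 H, ∫⁻ y in Ioo 1 Y,
          ENNReal.ofReal (A * (δ ^ (-(2 - 2 * ε)) * (1 + δ) ^ (-(1 + ε)))) *
          ENNReal.ofReal ((psiRemainder (y + δ * y) - psiRemainder y) ^ 2 * y ^ (-(2 + ε))) := by
        refine le_of_le_of_eq ?_ (lintegral_lintegral_swap hmeas.aemeasurable)
        exact setLIntegral_mono_ae' measurableSet_Ioo (Eventually.of_forall fun y hy =>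
          setLIntegral_incrementSq_le hε hε1 hH hHY hy.1.le hy.2.le)
    _ ≤ ∫⁻ δ in Ioo 0 H, ENNReal.ofReal (A * C) * ENNReal.ofReal (δ ^ (ε - 1)) :=
        setLIntegral_mono_ae' measurableSet_Ioo (Eventually.of_forall hslice)
    _ = ENNReal.ofReal (A * C * (H ^ ε / ε)) := by
        rw [lintegral_const_mul' _ _ ENNReal.ofReal_ne_top, setLIntegral_Ioo_rpow_sub_one hε hH.le,
          ← ENNReal.ofReal_mul (by positivity)]
    _ = ENNReal.ofReal (2 ^ (1 + ε) * C / ε * Y ^ (1 + 3 * ε) * H ^ (2 - ε)) := by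
        rw [hA, weight_mul_rpow_div C hY0 hH]

lemma measurable_lintegral_incrementSq (H : ℝ) :
    Measurable fun y => ∫⁻ w in Ioo 0 H, ENNReal.ofReal (incrementSq y w) :=
  Measurable.lintegral_prod_right' (f := fun p : ℝ × ℝ => ENNReal.ofReal (incrementSq p.1 p.2))
    (measurable_incrementSq measurable_fst measurable_snd).ennreal_ofReal

/-- An increment of length `h` is the difference of two increments whose lengths `v` and `v - h` may
be averaged over `h < v < 2 * h`. -/
lemma mul_incrementSq_le_lintegral {h : ℝ} (hh : 0 < h) (x : ℝ) :
    ENNReal.ofReal h * ENNReal.ofReal (incrementSq x h) ≤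
      2 * (∫⁻ v in Ioo 0 (2 * h), ENNReal.ofReal (incrementSq x v)) +
      2 * ∫⁻ w in Ioo 0 (2 * h), ENNReal.ofReal (incrementSq (x + h) w) := by
  have hmeas (y c : ℝ) : Measurable fun v => ENNReal.ofReal (incrementSq y (v - c)) :=
    (measurable_incrementSq measurable_const (measurable_id.sub_const c)).ennreal_ofReal
  have hmeas₀ : Measurable fun v => ENNReal.ofReal (incrementSq x v) := by
    simpa using hmeas x 0
  have hsplit (v : ℝ) : ENNReal.ofReal (incrementSq x h) ≤
      2 * ENNReal.ofReal (incrementSq x v) + 2 * ENNReal.ofReal (incrementSq (x + h) (v - h)) := by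
    refine (ENNReal.ofReal_le_ofReal (incrementSq_le_add x h v)).trans ?_
    refine ENNReal.ofReal_add_le.trans_eq ?_
    rw [ENNReal.ofReal_mul zero_le_two, ENNReal.ofReal_mul zero_le_two, ENNReal.ofReal_ofNat]
  have hshift : ∫⁻ v in Ioo h (2 * h), ENNReal.ofReal (incrementSq (x + h) (v - h)) =
      ∫⁻ w in Ioo 0 h, ENNReal.ofReal (incrementSq (x + h) w) := by
    have := setLIntegral_Ioo_comp_add_right
      (fun v => ENNReal.ofReal (incrementSq (x + h) (v - h))) 0 h h
    rw [zero_add, ← two_mul] at this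
    simpa only [add_sub_cancel_right] using this.symm
  calc ENNReal.ofReal h * ENNReal.ofReal (incrementSq x h)
      = ∫⁻ _ in Ioo h (2 * h), ENNReal.ofReal (incrementSq x h) := by
        rw [setLIntegral_const, volume_Ioo, mul_comm, two_mul, add_sub_cancel_right]
    _ ≤ ∫⁻ v in Ioo h (2 * h), (2 * ENNReal.ofReal (incrementSq x v) +
          2 * ENNReal.ofReal (incrementSq (x + h) (v - h))) := lintegral_mono hsplit
    _ = 2 * (∫⁻ v in Ioo h (2 * h), ENNReal.ofReal (incrementSq x v)) +
          2 * ∫⁻ w in Ioo 0 h, ENNReal.ofReal (incrementSq (x + h) w) := by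
        rw [lintegral_add_left (hmeas₀.const_mul 2), lintegral_const_mul _ hmeas₀,
          lintegral_const_mul _ (hmeas (x + h) h), hshift]
    _ ≤ 2 * (∫⁻ v in Ioo 0 (2 * h), ENNReal.ofReal (incrementSq x v)) +
          2 * ∫⁻ w in Ioo 0 (2 * h), ENNReal.ofReal (incrementSq (x + h) w) := by
        gcongr 2 * ?_ + 2 * ?_
        · exact lintegral_mono_set (Ioo_subset_Ioo_left hh.le)
        · exact lintegral_mono_set (Ioo_subset_Ioo_right (by linarith))

lemma mul_lintegral_incrementSq_le {h K : ℝ} (hh : 0 < h) (hK : h ≤ K) :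
    ENNReal.ofReal h * ∫⁻ x in Ioo 1 K, ENNReal.ofReal (incrementSq x h) ≤
      4 * ∫⁻ y in Ioo 1 (2 * K), ∫⁻ w in Ioo 0 (2 * h), ENNReal.ofReal (incrementSq y w) := by
  have hmeas := measurable_lintegral_incrementSq (2 * h)
  set f : ℝ → ENNReal := fun y => ∫⁻ w in Ioo 0 (2 * h), ENNReal.ofReal (incrementSq y w)
  calc ENNReal.ofReal h * ∫⁻ x in Ioo 1 K, ENNReal.ofReal (incrementSq x h)
      ≤ ∫⁻ x in Ioo 1 K, (2 * f x + 2 * f (x + h)) := by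
        rw [← lintegral_const_mul' _ _ ENNReal.ofReal_ne_top]
        exact lintegral_mono fun x => mul_incrementSq_le_lintegral hh x
    _ = 2 * (∫⁻ x in Ioo 1 K, f x) + 2 * ∫⁻ y in Ioo (1 + h) (K + h), f y := by
        have hmeas_shift : Measurable fun x => f (x + h) := hmeas.comp (measurable_id.add_const h)
        rw [lintegral_add_left (hmeas.const_mul 2), lintegral_const_mul _ hmeas,
          lintegral_const_mul _ hmeas_shift, setLIntegral_Ioo_comp_add_right]
    _ ≤ 2 * (∫⁻ y in Ioo 1 (2 * K), f y) + 2 * ∫⁻ y in Ioo 1 (2 * K), f y := by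
        gcongr 2 * ?_ + 2 * ?_
        · exact lintegral_mono_set (Ioo_subset_Ioo_right (by linarith))
        · exact lintegral_mono_set (Ioo_subset_Ioo (by linarith) (by linarith))
    _ = 4 * ∫⁻ y in Ioo 1 (2 * K), f y := by
        rw [← add_mul]
        norm_num

theorem exists_integral_incrementSq_le (hRH : RiemannHypothesis) (hε : 0 < ε) (hε1 : ε < 1) :
    ∃ C, 0 < C ∧ ∀ h K : ℝ, 1 ≤ h → h ≤ K →
      ∫ x in (1 : ℝ)..K, incrementSq x h ≤ C * K ^ (1 + 3 * ε) * h := by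
  obtain ⟨C, hC, hmoment⟩ := exists_lintegral_lintegral_incrementSq_le hRH hε hε1
  refine ⟨4 * (C * 2 ^ (1 + 3 * ε) * 2 ^ (2 - ε)), by positivity, fun h K hh hK => ?_⟩
  have h0 : 0 < h := by linarith
  have hK0 : 0 < K := by linarith
  have hle := (mul_lintegral_incrementSq_le h0 hK).trans
    (mul_le_mul_right (hmoment (2 * K) (2 * h) (by linarith) (by linarith)) 4)
  rw [← ofReal_integral_eq_lintegral_ofReal (integrableOn_incrementSq zero_le_one h0.le)
      (Eventually.of_forall fun x => incrementSq_nonneg _ _), ← ENNReal.ofReal_mul h0.le,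
    ← ENNReal.ofReal_ofNat 4, ← ENNReal.ofReal_mul (by norm_num),
    ENNReal.ofReal_le_ofReal_iff (by positivity)] at hle
  rw [intervalIntegral.integral_of_le (by linarith), integral_Ioc_eq_integral_Ioo]
  refine le_of_mul_le_mul_left (hle.trans ?_) h0
  rw [mul_rpow zero_le_two hK0.le, mul_rpow zero_le_two h0.le]
  calc 4 * (C * (2 ^ (1 + 3 * ε) * K ^ (1 + 3 * ε)) * (2 ^ (2 - ε) * h ^ (2 - ε)))
      ≤ 4 * (C * (2 ^ (1 + 3 * ε) * K ^ (1 + 3 * ε)) * (2 ^ (2 - ε) * (h * h))) := by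
        gcongr
        exact rpow_two_sub_le_mul_self hh hε.le
    _ = h * (4 * (C * 2 ^ (1 + 3 * ε) * 2 ^ (2 - ε)) * K ^ (1 + 3 * ε) * h) := by ring

lemma mul_exp_sub_one_mem_Ioo {h u η : ℝ} (hh : 0 < h) (hu : u ∈ Ioo 0 η) (hη : η ≤ 1) :
    h * (exp u - 1) ∈ Ioo 0 (2 * η * h) := by
  have hpos : 1 < exp u := one_lt_exp_iff.2 hu.1
  have hle : exp u - 1 ≤ 2 * u := by
    have := abs_exp_sub_one_le (x := u) (by rw [abs_of_pos hu.1]; linarith [hu.2])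
    rwa [abs_of_pos (sub_pos.2 hpos), abs_of_pos hu.1] at this
  refine ⟨mul_pos hh (sub_pos.2 hpos), ?_⟩
  rw [mul_comm h]
  gcongr
  linarith [hu.2]

lemma mul_setLIntegral_comp_exp_sub_one_le (f : ℝ → ENNReal) {h η : ℝ} (hh : 0 < h)
    (hη : η ≤ 1) :
    ENNReal.ofReal h * ∫⁻ u in Ioo 0 η, f (h * (exp u - 1)) ≤ ∫⁻ w in Ioo 0 (2 * η * h), f w := by
  have hinj : InjOn (fun u => h * (exp u - 1)) (Ioo 0 η) := fun u _ v _ huv =>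
    exp_injective (sub_left_injective (mul_left_cancel₀ hh.ne' huv))
  calc ENNReal.ofReal h * ∫⁻ u in Ioo 0 η, f (h * (exp u - 1))
      = ∫⁻ u in Ioo 0 η, ENNReal.ofReal h * f (h * (exp u - 1)) :=
        (lintegral_const_mul' _ _ ENNReal.ofReal_ne_top).symm
    _ ≤ ∫⁻ u in Ioo 0 η, ENNReal.ofReal |h * exp u| * f (h * (exp u - 1)) := by
        refine setLIntegral_mono_ae' measurableSet_Ioo (Eventually.of_forall fun u hu => ?_)
        gcongr
        rw [abs_of_pos (by positivity)]
        exact le_mul_of_one_le_right hh.le (one_le_exp hu.1.le)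
    _ = ∫⁻ w in (fun u => h * (exp u - 1)) '' Ioo 0 η, f w :=
        (lintegral_image_eq_lintegral_abs_deriv_mul measurableSet_Ioo
          (fun u _ => (((hasDerivAt_exp u).sub_const 1).const_mul h).hasDerivWithinAt) hinj _).symm
    _ ≤ ∫⁻ w in Ioo 0 (2 * η * h), f w :=
        lintegral_mono_set (image_subset_iff.2 fun u hu => mul_exp_sub_one_mem_Ioo hh hu hη)

theorem exists_lintegral_incrementSq_exp_le (hRH : RiemannHypothesis) (hε : 0 < ε)
    (hε1 : ε < 1) :
    ∃ C, 0 < C ∧ ∀ h K X η : ℝ, 1 ≤ h → h ≤ X → 1 ≤ K → 0 < η → η ≤ 1 →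
      ∫⁻ x in Ioo K X, ∫⁻ u in Ioo 0 η, ENNReal.ofReal (incrementSq (x + h) (h * (exp u - 1))) ≤
        ENNReal.ofReal (C * X ^ (1 + 3 * ε) * η ^ (2 - ε) * h) := by
  obtain ⟨C, hC, hmoment⟩ := exists_lintegral_lintegral_incrementSq_le hRH hε hε1
  refine ⟨C * 2 ^ (1 + 3 * ε) * 2 ^ (2 - ε), by positivity, fun h K X η hh hX hK hη hη1 => ?_⟩
  have h0 : 0 < h := by linarith
  have hX0 : 0 < X := by linarith
  have hconst : C * (2 * X) ^ (1 + 3 * ε) * (2 * η * h) ^ (2 - ε) ≤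
      h * (C * 2 ^ (1 + 3 * ε) * 2 ^ (2 - ε) * X ^ (1 + 3 * ε) * η ^ (2 - ε) * h) := by
    rw [mul_rpow (by positivity) h0.le, mul_rpow zero_le_two hη.le, mul_rpow zero_le_two hX0.le]
    calc C * (2 ^ (1 + 3 * ε) * X ^ (1 + 3 * ε)) * (2 ^ (2 - ε) * η ^ (2 - ε) * h ^ (2 - ε))
        ≤ C * (2 ^ (1 + 3 * ε) * X ^ (1 + 3 * ε)) * (2 ^ (2 - ε) * η ^ (2 - ε) * (h * h)) := by
          gcongr
          exact rpow_two_sub_le_mul_self hh hε.le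
      _ = h * (C * 2 ^ (1 + 3 * ε) * 2 ^ (2 - ε) * X ^ (1 + 3 * ε) * η ^ (2 - ε) * h) := by ring
  refine (ENNReal.mul_le_mul_iff_right (a := ENNReal.ofReal h) (by simpa using h0)
    ENNReal.ofReal_ne_top).1 ?_
  rw [← ENNReal.ofReal_mul h0.le, ← lintegral_const_mul' _ _ ENNReal.ofReal_ne_top]
  calc ∫⁻ x in Ioo K X, ENNReal.ofReal h *
        ∫⁻ u in Ioo 0 η, ENNReal.ofReal (incrementSq (x + h) (h * (exp u - 1)))
      ≤ ∫⁻ x in Ioo K X, ∫⁻ w in Ioo 0 (2 * η * h), ENNReal.ofReal (incrementSq (x + h) w) :=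
        lintegral_mono fun x => mul_setLIntegral_comp_exp_sub_one_le
          (fun w => ENNReal.ofReal (incrementSq (x + h) w)) h0 hη1
    _ = ∫⁻ y in Ioo (K + h) (X + h), ∫⁻ w in Ioo 0 (2 * η * h),
          ENNReal.ofReal (incrementSq y w) := setLIntegral_Ioo_comp_add_right
        (fun y => ∫⁻ w in Ioo 0 (2 * η * h), ENNReal.ofReal (incrementSq y w)) K X h
    _ ≤ ∫⁻ y in Ioo 1 (2 * X), ∫⁻ w in Ioo 0 (2 * η * h), ENNReal.ofReal (incrementSq y w) :=
        lintegral_mono_set (Ioo_subset_Ioo (by linarith) (by linarith))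
    _ ≤ ENNReal.ofReal (C * (2 * X) ^ (1 + 3 * ε) * (2 * η * h) ^ (2 - ε)) :=
        hmoment (2 * X) (2 * η * h) (by positivity) (by nlinarith)
    _ ≤ _ := ENNReal.ofReal_le_ofReal hconst

end ShortIncrementMoments

section ExpectedVariance

variable {L x v h X δ : ℝ}

lemma zetaVarDelta_eq_integral (X δ : ℝ) :
    zetaVarDelta X δ = ∫ x in (1 : ℝ)..X, incrementSq x (δ * x) := by
  unfold zetaVarDelta incrementSq psiRemainder
  congr with x
  ring

lemma zetaVarH_eq_integral (X h : ℝ) : zetaVarH X h = ∫ x in (1 : ℝ)..X, incrementSq x h := by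
  unfold zetaVarH incrementSq psiRemainder
  congr with x
  ring

/-- The conjectural mean value `v (log (x/v) + 1 - L)` of `incrementSq` near `(x, v)`, where
`L` stands for `γ₀ + log 2π`. -/
noncomputable def expectedIncrementSq (L x v : ℝ) : ℝ := v * (log (x / v) + 1 - L)

/-- The deviation of `incrementSq` from its conjectural mean value. -/
noncomputable def incrementSqError (L x v : ℝ) : ℝ := incrementSq x v - expectedIncrementSq L x v

/-- The error term in the asymptotic formula for `V(X, δ)`. -/
noncomputable def zetaVarDeltaError (L X δ : ℝ) : ℝ :=
  zetaVarDelta X δ - 1 / 2 * δ * X ^ 2 * (log (1 / δ) + 1 - L)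

lemma log_div_mem_Icc (hh : 1 ≤ h) (hx : h ≤ x) (hxX : x ≤ X) : log (x / h) ∈ Icc 0 (log X) := by
  have h0 : 0 < h := zero_lt_one.trans_le hh
  have hx0 : 0 < x := h0.trans_le hx
  exact ⟨log_nonneg ((one_le_div h0).2 hx),
    log_le_log (by positivity) ((div_le_self hx0.le hh).trans hxX)⟩

lemma abs_log_div_add_one_sub_le (hh : 1 ≤ h) (hx : h ≤ x) (hxX : x ≤ X) :
    |log (x / h) + 1 - L| ≤ log X + 1 + |L| := by
  obtain ⟨hlog, hlogX⟩ := log_div_mem_Icc hh hx hxX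
  refine (abs_sub _ _).trans ?_
  rw [abs_of_nonneg (by linarith)]
  linarith

lemma abs_expectedIncrementSq_le (hv : 1 ≤ v) (hx : v ≤ x) (hxX : x ≤ X) :
    |expectedIncrementSq L x v| ≤ v * (log X + 1 + |L|) := by
  have hv0 : 0 < v := zero_lt_one.trans_le hv
  rw [expectedIncrementSq, abs_mul, abs_of_pos hv0]
  gcongr
  exact abs_log_div_add_one_sub_le hv hx hxX

lemma measurable_expectedIncrementSq (L : ℝ) {α : Type*} [MeasurableSpace α] {f g : α → ℝ}
    (hf : Measurable f) (hg : Measurable g) :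
    Measurable fun a => expectedIncrementSq L (f a) (g a) := by
  unfold expectedIncrementSq
  fun_prop

lemma measurable_incrementSqError (L : ℝ) {α : Type*} [MeasurableSpace α] {f g : α → ℝ}
    (hf : Measurable f) (hg : Measurable g) : Measurable fun a => incrementSqError L (f a) (g a) :=
  (measurable_incrementSq hf hg).sub (measurable_expectedIncrementSq L hf hg)

lemma abs_incrementSqError_le {V : ℝ} (hv : 1 ≤ v) (hvV : v ≤ V) (hx : v ≤ x) (hxX : x ≤ X) :
    |incrementSqError L x v| ≤ (12 * (X + V)) ^ 2 + V * (log X + 1 + |L|) := by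
  have hlogX : 0 ≤ log X := log_nonneg (by linarith)
  refine (abs_sub _ _).trans (add_le_add ?_ ?_)
  · rw [abs_of_nonneg (incrementSq_nonneg _ _)]
    exact incrementSq_le (by linarith) hxX (by linarith) hvV
  · refine (abs_expectedIncrementSq_le hv hx hxX).trans ?_
    gcongr

lemma intervalIntegrable_incrementSq_mul {a b : ℝ} (ha : 0 ≤ a) (hab : a ≤ b) (hδ : 0 ≤ δ) :
    IntervalIntegrable (fun x => incrementSq x (δ * x)) volume a b := by
  rw [intervalIntegrable_iff_integrableOn_Ioc_of_le hab]
  refine Measure.integrableOn_of_bounded (M := (12 * (b + δ * b)) ^ 2) (by simp)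
    (measurable_incrementSq measurable_id (measurable_id.const_mul δ)).aestronglyMeasurable ?_
  filter_upwards [ae_restrict_mem measurableSet_Ioc] with x hx
  have hx0 : 0 ≤ x := ha.trans hx.1.le
  rw [norm_of_nonneg (incrementSq_nonneg _ _)]
  exact incrementSq_le hx0 hx.2 (by positivity) (mul_le_mul_of_nonneg_left hx.2 hδ)

lemma integral_incrementSqError_mul {a b : ℝ} (ha : 1 ≤ a) (hab : a ≤ b) (hδ : 0 < δ) :
    ∫ x in Icc a b, incrementSqError L x (δ * x) =
      zetaVarDeltaError L b δ - zetaVarDeltaError L a δ := by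
  have ha0 : 0 ≤ a := zero_le_one.trans ha
  have hcongr : ∫ x in a..b, incrementSqError L x (δ * x) =
      ∫ x in a..b, (incrementSq x (δ * x) - δ * (log (1 / δ) + 1 - L) * x) := by
    refine intervalIntegral.integral_congr fun x hx => ?_
    rw [uIcc_of_le hab] at hx
    have hx0 : x ≠ 0 := by linarith [hx.1]
    simp only [incrementSqError, expectedIncrementSq]
    rw [show x / (δ * x) = 1 / δ by field_simp]
    ring
  rw [integral_Icc_eq_integral_Ioc, ← intervalIntegral.integral_of_le hab, hcongr,
    intervalIntegral.integral_sub (intervalIntegrable_incrementSq_mul ha0 hab hδ.le)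
      (Continuous.intervalIntegrable (by fun_prop) _ _),
    intervalIntegral.integral_const_mul, integral_id, zetaVarDeltaError, zetaVarDeltaError,
    zetaVarDelta_eq_integral, zetaVarDelta_eq_integral,
    ← intervalIntegral.integral_add_adjacent_intervals
      (intervalIntegrable_incrementSq_mul zero_le_one ha hδ.le)
      (intervalIntegrable_incrementSq_mul ha0 hab hδ.le)]
  ring

end ExpectedVariance

section DilationStrip

variable {h K X η x τ : ℝ}

/-- The region `K ≤ x ≤ X`, `h ≤ e^τ x ≤ h e^η` over which the asymptotic formula for `V(x, δ)`,
with `δ = e^τ`, is averaged; its horizontal sections are intervals in `x`, and its vertical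
sections correspond to `v = h e^u` with `0 ≤ u ≤ η`. -/
def dilationStrip (h K X η : ℝ) : Set (ℝ × ℝ) :=
  {p | p.1 ∈ Icc K X ∧ exp p.2 * p.1 ∈ Icc h (h * exp η)}

lemma measurableSet_dilationStrip : MeasurableSet (dilationStrip h K X η) :=
  (measurableSet_Icc.preimage measurable_fst).inter
    (measurableSet_Icc.preimage (measurable_exp.comp measurable_snd |>.mul measurable_fst))

lemma mul_exp_add_log_div (hh : 0 < h) (hx : 0 < x) (τ : ℝ) :
    h * exp (τ + log (x / h)) = exp τ * x := by
  rw [exp_add, exp_log (by positivity)]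
  field_simp

lemma mem_dilationStrip_iff_add_log_mem (hh : 0 < h) (hx : x ∈ Icc K X) (hx0 : 0 < x) :
    (x, τ) ∈ dilationStrip h K X η ↔ τ + log (x / h) ∈ Icc 0 η := by
  simp only [dilationStrip, mem_ofPred_eq, ← mul_exp_add_log_div hh hx0,
    le_mul_iff_one_le_right hh, one_le_exp_iff, mul_le_mul_iff_right₀ hh, exp_le_exp,
    mem_Icc (a := h), mem_Icc (a := (0 : ℝ)), and_iff_right hx]

lemma mem_dilationStrip_iff_mem_Icc : (x, τ) ∈ dilationStrip h K X η ↔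
    x ∈ Icc (max K (h / exp τ)) (min X (h * exp η / exp τ)) := by
  simp only [dilationStrip, mem_ofPred_eq, mem_Icc, max_le_iff, le_min_iff,
    div_le_iff₀ (exp_pos τ), le_div_iff₀ (exp_pos τ), mul_comm (exp τ) x]
  tauto

lemma snd_mem_Icc_of_mem_dilationStrip (hh : 0 < h) (hK : h * exp η ≤ K)
    (hx : (x, τ) ∈ dilationStrip h K X η) : τ ∈ Icc (log (h / X)) 0 := by
  obtain ⟨⟨hKx, hxX⟩, hlow, hupp⟩ := hx
  simp only at hKx hxX hlow hupp
  have hx0 : 0 < x := lt_of_lt_of_le (by positivity) (hK.trans hKx)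
  have hX0 : 0 < X := hx0.trans_le hxX
  constructor
  · rw [log_le_iff_le_exp (by positivity), div_le_iff₀ hX0]
    exact hlow.trans (by gcongr)
  · rw [← exp_le_one_iff]
    exact le_of_mul_le_mul_right (by linarith) hx0

lemma integral_integral_comp_mul_exp (f : ℝ → ℝ → ℝ) (hh : 0 < h) (hK : 0 < K) :
    ∫ x in Icc K X, ∫ u in Icc 0 η, f x (h * exp u) =
      ∫ x, ∫ τ, (dilationStrip h K X η).indicator (fun p => f p.1 (exp p.2 * p.1)) (x, τ) := by
  rw [← integral_indicator measurableSet_Icc]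
  congr with x
  by_cases hx : x ∈ Icc K X
  · have hx0 : 0 < x := hK.trans_le hx.1
    rw [indicator_of_mem hx, ← integral_indicator measurableSet_Icc,
      ← integral_add_right_eq_self _ (log (x / h))]
    congr with τ
    have hmem := mem_dilationStrip_iff_add_log_mem (η := η) (τ := τ) hh hx hx0
    by_cases hτ : (x, τ) ∈ dilationStrip h K X η
    · rw [indicator_of_mem hτ, indicator_of_mem (hmem.1 hτ), mul_exp_add_log_div hh hx0]
    · rw [indicator_of_notMem hτ, indicator_of_notMem (hτ ∘ hmem.2)]
  · rw [indicator_of_notMem hx]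
    exact (integral_eq_zero_of_ae (Eventually.of_forall fun τ =>
      indicator_of_notMem (fun hmem => hx hmem.1) _)).symm

lemma integral_indicator_dilationStrip (f : ℝ → ℝ → ℝ) (τ : ℝ) :
    ∫ x, (dilationStrip h K X η).indicator (fun p => f p.1 (exp p.2 * p.1)) (x, τ) =
      ∫ x in Icc (max K (h / exp τ)) (min X (h * exp η / exp τ)), f x (exp τ * x) := by
  rw [← integral_indicator measurableSet_Icc]
  congr with x
  have hmem := mem_dilationStrip_iff_mem_Icc (h := h) (K := K) (X := X) (η := η) (x := x) (τ := τ)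
  by_cases hx : (x, τ) ∈ dilationStrip h K X η
  · rw [indicator_of_mem hx, indicator_of_mem (hmem.1 hx)]
  · rw [indicator_of_notMem hx, indicator_of_notMem (hx ∘ hmem.2)]

end DilationStrip

section AveragedError

variable {L c D h K X η : ℝ}

/-- The asymptotic formula for `V(x, δ)` with error `D δ^(1+c) x²`, on the range `K ≤ x ≤ X` and
`h ≤ δx ≤ eh`. -/
def ZetaVarDeltaBound (L c D h K X : ℝ) : Prop :=
  ∀ x ∈ Icc K X, ∀ δ, 0 < δ → δ * x ∈ Icc h (h * exp 1) →
    |zetaVarDeltaError L x δ| ≤ D * δ ^ (1 + c) * x ^ 2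

lemma sq_mul_rpow_sub_one_le {δ : ℝ} (hh : 0 < h) (hX : 0 < X) (hδX : h / X ≤ δ) (hδ1 : δ ≤ 1) :
    h ^ 2 * δ ^ (c - 1) ≤ h ^ 2 + h * X * (h / X) ^ c := by
  have hq : 0 < h / X := by positivity
  have hδ : 0 < δ := hq.trans_le hδX
  rcases le_or_gt 1 c with hc1 | hc1
  · calc h ^ 2 * δ ^ (c - 1) ≤ h ^ 2 * 1 := by
          gcongr
          exact rpow_le_one hδ.le hδ1 (by linarith)
      _ ≤ h ^ 2 + h * X * (h / X) ^ c := by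
          rw [mul_one]
          exact le_add_of_nonneg_right (by positivity)
  · calc h ^ 2 * δ ^ (c - 1) ≤ h ^ 2 * (h / X) ^ (c - 1) := by
          gcongr ?_ * ?_
          exact rpow_le_rpow_of_nonpos hq hδX (by linarith)
      _ = h * X * (h / X) ^ c := by
          rw [rpow_sub_one hq.ne']
          field_simp
      _ ≤ h ^ 2 + h * X * (h / X) ^ c := le_add_of_nonneg_left (by positivity)

lemma mul_rpow_one_add_mul_sq_le {δ y : ℝ} (hD : 0 ≤ D) (hh : 0 < h) (hX : 0 < X)
    (hδX : h / X ≤ δ) (hδ1 : δ ≤ 1) (hy : 0 ≤ y) (hyh : δ * y ≤ h * exp 1) :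
    D * δ ^ (1 + c) * y ^ 2 ≤ D * exp 1 ^ 2 * (h ^ 2 + h * X * (h / X) ^ c) := by
  have hδ : 0 < δ := lt_of_lt_of_le (by positivity) hδX
  have hpow : δ ^ (1 + c) = δ ^ 2 * δ ^ (c - 1) := by
    rw [← rpow_natCast, ← rpow_add hδ]
    congr 1
    push_cast
    ring
  calc D * δ ^ (1 + c) * y ^ 2 = D * δ ^ (c - 1) * (δ * y) ^ 2 := by
        rw [hpow]
        ring
    _ ≤ D * δ ^ (c - 1) * (h * exp 1) ^ 2 := by gcongr
    _ = D * exp 1 ^ 2 * (h ^ 2 * δ ^ (c - 1)) := by ring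
    _ ≤ _ := by
        gcongr
        exact sq_mul_rpow_sub_one_le hh hX hδX hδ1

lemma mul_exp_le_of_le_one (hh : 0 < h) (hη : η ≤ 1) (hK : exp 1 * h ≤ K) : h * exp η ≤ K :=
  calc h * exp η ≤ h * exp 1 := by gcongr
    _ ≤ K := by rwa [mul_comm]

lemma abs_integral_incrementSqError_slice_le (hD : 0 ≤ D) (hh : 1 ≤ h)
    (hK : exp 1 * h ≤ K) (hX : 0 < X) (hη1 : η ≤ 1)
    (hbound : ZetaVarDeltaBound L c D h K X) (τ : ℝ) :
    ‖∫ x, (dilationStrip h K X η).indicator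
        (fun p => incrementSqError L p.1 (exp p.2 * p.1)) (x, τ)‖ ≤
      (Icc (log (h / X)) 0).indicator
        (fun _ => 2 * D * exp 1 ^ 2 * (h ^ 2 + h * X * (h / X) ^ c)) τ := by
  have h0 : 0 < h := zero_lt_one.trans_le hh
  have hK1 : 1 ≤ K := by nlinarith [one_lt_exp_iff.2 one_pos]
  rw [norm_eq_abs, integral_indicator_dilationStrip]
  set a := max K (h / exp τ)
  set b := min X (h * exp η / exp τ)
  rcases le_or_gt a b with hab | hab
  · have haS : (a, τ) ∈ dilationStrip h K X η := mem_dilationStrip_iff_mem_Icc.2 ⟨le_rfl, hab⟩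
    have hbS : (b, τ) ∈ dilationStrip h K X η := mem_dilationStrip_iff_mem_Icc.2 ⟨hab, le_rfl⟩
    have hτ := snd_mem_Icc_of_mem_dilationStrip h0 (mul_exp_le_of_le_one h0 hη1 hK) haS
    have hendpoint (y : ℝ) (hy : (y, τ) ∈ dilationStrip h K X η) :
        |zetaVarDeltaError L y (exp τ)| ≤
          D * exp 1 ^ 2 * (h ^ 2 + h * X * (h / X) ^ c) := by
      have hyh : exp τ * y ≤ h * exp 1 := hy.2.2.trans (by gcongr)
      exact (hbound y hy.1 _ (exp_pos τ) ⟨hy.2.1, hyh⟩).trans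
        (mul_rpow_one_add_mul_sq_le hD h0 hX ((log_le_iff_le_exp (by positivity)).1 hτ.1)
          (exp_le_one_iff.2 hτ.2) (by linarith [hy.1.1]) hyh)
    rw [indicator_of_mem hτ,
      integral_incrementSqError_mul (hK1.trans haS.1.1) hab (exp_pos τ)]
    refine (abs_sub _ _).trans ?_
    linarith [hendpoint a haS, hendpoint b hbS]
  · rw [Icc_eq_empty hab.not_ge, setIntegral_empty, abs_zero]
    exact indicator_nonneg (fun _ _ => by positivity) _

lemma integrable_incrementSqError_dilationStrip (hh : 1 ≤ h) (hK : exp 1 * h ≤ K)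
    (hη1 : η ≤ 1) :
    Integrable ((dilationStrip h K X η).indicator
      fun p => incrementSqError L p.1 (exp p.2 * p.1)) (volume.prod volume) := by
  have h0 : 0 < h := zero_lt_one.trans_le hh
  have hhK := mul_exp_le_of_le_one h0 hη1 hK
  rw [integrable_indicator_iff measurableSet_dilationStrip]
  refine Measure.integrableOn_of_bounded
    (M := (12 * (X + h * exp η)) ^ 2 + h * exp η * (log X + 1 + |L|)) ?_
    (measurable_incrementSqError L measurable_fst
      (measurable_exp.comp measurable_snd |>.mul measurable_fst)).aestronglyMeasurable ?_
  · have hsub : dilationStrip h K X η ⊆ Icc K X ×ˢ Icc (log (h / X)) 0 := fun p hp =>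
      ⟨hp.1, snd_mem_Icc_of_mem_dilationStrip h0 hhK hp⟩
    exact ((measure_mono hsub).trans_lt (isCompact_Icc.prod isCompact_Icc).measure_lt_top).ne
  · filter_upwards [ae_restrict_mem measurableSet_dilationStrip] with p hp
    exact abs_incrementSqError_le (hh.trans hp.2.1) hp.2.2 (hp.2.2.trans (hhK.trans hp.1.1)) hp.1.2

/-- Saffari–Vaughan: substituting `δ = h e^u / x` turns the average of `V(x, δ)` over `δ` into an
average over `u` of `∫ (ψ(x + h e^u) - ψ(x) - h e^u)² dx`. -/
theorem abs_integral_incrementSqError_le (hD : 0 ≤ D) (hh : 1 ≤ h)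
    (hK : exp 1 * h ≤ K) (hKX : K ≤ X) (hη1 : η ≤ 1) (hbound : ZetaVarDeltaBound L c D h K X) :
    |∫ x in Icc K X, ∫ u in Icc 0 η, incrementSqError L x (h * exp u)| ≤
      2 * D * exp 1 ^ 2 * (h ^ 2 + h * X * (h / X) ^ c) * log X := by
  have h0 : 0 < h := zero_lt_one.trans_le hh
  have hhK : h ≤ K := by nlinarith [one_lt_exp_iff.2 one_pos]
  have hX0 : 0 < X := by linarith
  rw [integral_integral_comp_mul_exp _ h0 (h0.trans_le hhK),
    integral_integral_swap (f := fun x τ => (dilationStrip h K X η).indicator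
        (fun p => incrementSqError L p.1 (exp p.2 * p.1)) (x, τ))
      (integrable_incrementSqError_dilationStrip hh hK hη1)]
  set B := 2 * D * exp 1 ^ 2 * (h ^ 2 + h * X * (h / X) ^ c)
  have hB : 0 ≤ B := by positivity
  have hconst : Integrable ((Icc (log (h / X)) 0).indicator fun _ => B) :=
    (integrable_indicator_iff measurableSet_Icc).2 (integrableOn_const (by simp) (by simp))
  have hlog : log (h / X) ≤ 0 := log_nonpos (by positivity) ((div_le_one hX0).2 (hhK.trans hKX))
  rw [← norm_eq_abs]
  refine (norm_integral_le_of_norm_le hconst (Eventually.of_forall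
    (abs_integral_incrementSqError_slice_le hD hh hK hX0 hη1 hbound))).trans ?_
  rw [integral_indicator measurableSet_Icc, setIntegral_const, volume_real_Icc_of_le hlog,
    log_div h0.ne' hX0.ne', smul_eq_mul, mul_comm]
  exact mul_le_mul_of_nonneg_left (by linarith [log_nonneg hh]) hB

end AveragedError

section BoxAverages

variable {L h K X η s : ℝ}

/-- Lebesgue measure on the box of pairs `(x, u)` with `K ≤ x ≤ X` and `0 ≤ u ≤ η`, where `u`
parametrises the increments `h e^u`. -/
noncomputable def boxMeasure (K X η : ℝ) : Measure (ℝ × ℝ) :=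
  (volume.restrict (Icc K X)).prod (volume.restrict (Icc 0 η))

instance (K X η : ℝ) : IsFiniteMeasure (boxMeasure K X η) := by
  unfold boxMeasure
  infer_instance

lemma ae_mem_boxMeasure (K X η : ℝ) : ∀ᵐ p ∂boxMeasure K X η, p ∈ Icc K X ×ˢ Icc 0 η := by
  rw [boxMeasure, Measure.prod_restrict]
  exact ae_restrict_mem (measurableSet_Icc.prod measurableSet_Icc)

lemma boxMeasure_real_univ (hKX : K ≤ X) (hη : 0 ≤ η) :
    (boxMeasure K X η).real univ = (X - K) * η := by
  rw [boxMeasure, ← univ_prod_univ, measureReal_prod_prod, measureReal_restrict_apply_univ,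
    measureReal_restrict_apply_univ, volume_real_Icc_of_le hKX, volume_real_Icc_of_le hη, sub_zero]

lemma integral_boxMeasure_fst {f : ℝ → ℝ} (hη : 0 ≤ η) :
    ∫ p, f p.1 ∂boxMeasure K X η = η * ∫ x in Icc K X, f x := by
  have := integral_prod_mul (μ := volume.restrict (Icc K X)) (ν := volume.restrict (Icc 0 η)) f
    (fun _ => (1 : ℝ))
  simpa [boxMeasure, volume_real_Icc_of_le hη, mul_comm] using this

lemma integrable_boxMeasure_of_bound {f : ℝ × ℝ → ℝ} (hf : Measurable f) (M : ℝ)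
    (hM : ∀ p ∈ Icc K X ×ˢ Icc 0 η, |f p| ≤ M) : Integrable f (boxMeasure K X η) :=
  Integrable.of_bound hf.aestronglyMeasurable M ((ae_mem_boxMeasure K X η).mono hM)

lemma integrable_boxMeasure_incrementSq {f g : ℝ × ℝ → ℝ} (hf : Measurable f) (hg : Measurable g)
    {Y V : ℝ} (hfY : ∀ p ∈ Icc K X ×ˢ Icc 0 η, f p ∈ Icc 0 Y)
    (hgV : ∀ p ∈ Icc K X ×ˢ Icc 0 η, g p ∈ Icc 0 V) :
    Integrable (fun p => incrementSq (f p) (g p)) (boxMeasure K X η) := by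
  refine integrable_boxMeasure_of_bound (measurable_incrementSq hf hg) ((12 * (Y + V)) ^ 2)
    fun p hp => ?_
  rw [abs_of_nonneg (incrementSq_nonneg _ _)]
  exact incrementSq_le (hfY p hp).1 (hfY p hp).2 (hgV p hp).1 (hgV p hp).2

lemma integrable_boxMeasure_incrementSq_const (hK : 0 ≤ K) (hh : 0 ≤ h) :
    Integrable (fun p => incrementSq p.1 h) (boxMeasure K X η) :=
  integrable_boxMeasure_incrementSq measurable_fst measurable_const
    (fun _ hp => ⟨hK.trans hp.1.1, hp.1.2⟩) fun _ _ => ⟨hh, le_rfl⟩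

lemma integrable_boxMeasure_incrementSq_mul_exp (hK : 0 ≤ K) (hh : 0 ≤ h) :
    Integrable (fun p => incrementSq p.1 (h * exp p.2)) (boxMeasure K X η) :=
  integrable_boxMeasure_incrementSq (V := h * exp η) measurable_fst (by fun_prop)
    (fun _ hp => ⟨hK.trans hp.1.1, hp.1.2⟩)
    fun _ hp => ⟨by positivity, mul_le_mul_of_nonneg_left (exp_le_exp.2 hp.2.2) hh⟩

lemma integrable_boxMeasure_incrementSq_shift (hK : 0 ≤ K) (hh : 0 ≤ h) :
    Integrable (fun p => incrementSq (p.1 + h) (h * (exp p.2 - 1))) (boxMeasure K X η) :=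
  integrable_boxMeasure_incrementSq (Y := X + h) (V := h * (exp η - 1))
    (by fun_prop) (by fun_prop)
    (fun _ hp => ⟨add_nonneg (hK.trans hp.1.1) hh, by gcongr; exact hp.1.2⟩)
    fun _ hp => ⟨mul_nonneg hh (sub_nonneg.2 (one_le_exp hp.2.1)), by gcongr; exact hp.2.2⟩

lemma integrable_boxMeasure_expectedIncrementSq (hh : 1 ≤ h) (hK : h * exp η ≤ K)
    {g : ℝ → ℝ} (hg : Measurable g) (hgη : ∀ u ∈ Icc 0 η, g u ∈ Icc h (h * exp η)) :
    Integrable (fun p => expectedIncrementSq L p.1 (g p.2)) (boxMeasure K X η) := by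
  refine integrable_boxMeasure_of_bound
    (measurable_expectedIncrementSq L measurable_fst (hg.comp measurable_snd))
    (h * exp η * (log X + 1 + |L|)) fun p hp => ?_
  obtain ⟨hlow, hupp⟩ := hgη p.2 hp.2
  have hKp : h * exp η ≤ p.1 := hK.trans hp.1.1
  have hlogX : 0 ≤ log X := log_nonneg (by linarith [hp.1.2])
  exact (abs_expectedIncrementSq_le (hh.trans hlow) (hupp.trans hKp) hp.1.2).trans (by gcongr)

lemma mul_exp_mem_Icc {u : ℝ} (hh : 0 ≤ h) (hu : u ∈ Icc 0 η) :
    h * exp u ∈ Icc h (h * exp η) :=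
  ⟨le_mul_of_one_le_right hh (one_le_exp hu.1),
    mul_le_mul_of_nonneg_left (exp_le_exp.2 hu.2) hh⟩

end BoxAverages

section ExpectedAverages

variable {L h K X η : ℝ}

lemma integral_log_div_add_one_sub (hh : 0 < h) (hK : 0 < K) (hKX : K ≤ X) :
    ∫ x in Icc K X, (log (x / h) + 1 - L) =
      X * (log (X / h) - L) - K * (log (K / h) - L) := by
  have hpos (x : ℝ) (hx : x ∈ uIcc K X) : 0 < x := by
    rw [uIcc_of_le hKX] at hx
    exact hK.trans_le hx.1
  rw [integral_Icc_eq_integral_Ioc, ← intervalIntegral.integral_of_le hKX]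
  refine intervalIntegral.integral_eq_sub_of_hasDerivAt (f := fun x => x * (log (x / h) - L))
    (fun x hx => ?_) (ContinuousOn.intervalIntegrable ?_)
  · have hx0 := hpos x hx
    have hlog := ((hasDerivAt_id x).div_const h).log (by simp only [id]; positivity)
    refine ((hasDerivAt_id x).mul (hlog.sub_const L)).congr_deriv ?_
    simp only [id]
    field_simp
    ring
  · have hlog : ContinuousOn (fun x => log (x / h)) (uIcc K X) :=
      ContinuousOn.log (by fun_prop) fun x hx => (div_pos (hpos x hx) hh).ne'
    fun_prop

lemma abs_exp_mul_sub_sub_le {ℓ u : ℝ} (hu : 0 ≤ u) (hu1 : u ≤ 1) :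
    |exp u * (ℓ - u) - ℓ| ≤ u * (2 * |ℓ| + 3) := by
  have hexp : exp u - 1 ≤ 2 * u := by
    have := abs_exp_sub_one_le (x := u) (by rwa [abs_of_nonneg hu])
    rwa [abs_of_nonneg (sub_nonneg.2 (one_le_exp hu)), abs_of_nonneg hu] at this
  calc |exp u * (ℓ - u) - ℓ| = |(exp u - 1) * ℓ - u * exp u| := by ring_nf
    _ ≤ |(exp u - 1) * ℓ| + |u * exp u| := abs_sub _ _
    _ = (exp u - 1) * |ℓ| + u * exp u := by
        rw [abs_mul, abs_of_nonneg (sub_nonneg.2 (one_le_exp hu)),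
          abs_of_nonneg (by positivity : 0 ≤ u * exp u)]
    _ ≤ 2 * u * |ℓ| + u * 3 := by
        gcongr
        linarith
    _ = u * (2 * |ℓ| + 3) := by ring

lemma abs_expectedIncrementSq_mul_exp_sub_le {x u : ℝ} (hh : 1 ≤ h) (hx : h ≤ x) (hxX : x ≤ X)
    (hu : 0 ≤ u) (hu1 : u ≤ 1) :
    |expectedIncrementSq L x (h * exp u) - expectedIncrementSq L x h| ≤
      h * (u * (5 * (log X + 1 + |L|))) := by
  have h0 : 0 < h := zero_lt_one.trans_le hh
  have hx0 : 0 < x := h0.trans_le hx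
  have hlogX : 0 ≤ log X := log_nonneg (by linarith)
  have hlog : log (x / (h * exp u)) = log (x / h) - u := by
    rw [← div_div, log_div (by positivity) (by positivity), log_exp]
  calc |expectedIncrementSq L x (h * exp u) - expectedIncrementSq L x h|
      = |h * (exp u * ((log (x / h) + 1 - L) - u) - (log (x / h) + 1 - L))| := by
        rw [expectedIncrementSq, expectedIncrementSq, hlog]
        ring_nf
    _ ≤ h * (u * (2 * |log (x / h) + 1 - L| + 3)) := by
        rw [abs_mul, abs_of_pos h0]
        gcongr
        exact abs_exp_mul_sub_sub_le hu hu1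
    _ ≤ h * (u * (5 * (log X + 1 + |L|))) := by
        gcongr
        linarith [abs_log_div_add_one_sub_le (L := L) hh hx hxX, abs_nonneg L]

lemma abs_integral_expectedIncrementSq_sub_le (hh : 1 ≤ h) (hK : h ≤ K) (hKX : K ≤ X) :
    |(∫ x in Icc K X, expectedIncrementSq L x h) - h * X * (log (X / h) - L)| ≤
      h * K * (log X + 1 + |L|) := by
  have h0 : 0 < h := zero_lt_one.trans_le hh
  have hK0 : 0 < K := h0.trans_le hK
  obtain ⟨hlog, hlogX⟩ := log_div_mem_Icc hh hK hKX
  simp only [expectedIncrementSq]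
  rw [integral_const_mul, integral_log_div_add_one_sub h0 hK0 hKX,
    show h * (X * (log (X / h) - L) - K * (log (K / h) - L)) - h * X * (log (X / h) - L) =
      -(h * K * (log (K / h) - L)) by ring, abs_neg, abs_mul, abs_of_pos (by positivity)]
  gcongr
  refine (abs_sub _ _).trans ?_
  rw [abs_of_nonneg hlog]
  linarith

lemma abs_integral_boxMeasure_expectedIncrementSq_sub_le (hh : 1 ≤ h) (hK : exp 1 * h ≤ K)
    (hKX : K ≤ X) (hη : 0 ≤ η) (hη1 : η ≤ 1) :
    |(∫ p, expectedIncrementSq L p.1 (h * exp p.2) ∂boxMeasure K X η) -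
        η * (h * X * (log (X / h) - L))| ≤
      (η ^ 2 * h * X * 5 + η * h * K) * (log X + 1 + |L|) := by
  have h0 : 0 < h := zero_lt_one.trans_le hh
  have hKη := mul_exp_le_of_le_one h0 hη1 hK
  have hhK : h ≤ K := (le_mul_of_one_le_right h0.le (one_le_exp hη)).trans hKη
  have hlogX : 0 ≤ log X := log_nonneg (by linarith)
  have hInt := integrable_boxMeasure_expectedIncrementSq (L := L) (X := X) hh hKη
    (measurable_exp.const_mul h) fun u hu => mul_exp_mem_Icc h0.le hu
  have hint₀ := integrable_boxMeasure_expectedIncrementSq (L := L) (X := X) hh hKη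
    (measurable_const (a := h)) fun u _ => ⟨le_rfl, le_mul_of_one_le_right h0.le (one_le_exp hη)⟩
  have hflatten : |(∫ p, expectedIncrementSq L p.1 (h * exp p.2) ∂boxMeasure K X η) -
      ∫ p, expectedIncrementSq L p.1 h ∂boxMeasure K X η| ≤
      h * (η * (5 * (log X + 1 + |L|))) * ((X - K) * η) := by
    rw [← integral_sub hInt hint₀, ← norm_eq_abs, ← boxMeasure_real_univ hKX hη]
    refine norm_integral_le_of_norm_le_const ((ae_mem_boxMeasure K X η).mono fun p hp => ?_)
    refine (abs_expectedIncrementSq_mul_exp_sub_le hh (hhK.trans hp.1.1) hp.1.2 hp.2.1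
      (hp.2.2.trans hη1)).trans ?_
    gcongr
    exact hp.2.2
  have hflat : |(∫ p, expectedIncrementSq L p.1 h ∂boxMeasure K X η) -
      η * (h * X * (log (X / h) - L))| ≤ η * (h * K * (log X + 1 + |L|)) := by
    rw [integral_boxMeasure_fst (f := fun x => expectedIncrementSq L x h) hη, ← mul_sub, abs_mul,
      abs_of_nonneg hη]
    gcongr
    exact abs_integral_expectedIncrementSq_sub_le hh hhK hKX
  have hXK : (X - K) * η ≤ X * η := by gcongr; linarith
  calc _ ≤ h * (η * (5 * (log X + 1 + |L|))) * ((X - K) * η) +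
        η * (h * K * (log X + 1 + |L|)) := (abs_sub_le _ _ _).trans (add_le_add hflatten hflat)
    _ ≤ h * (η * (5 * (log X + 1 + |L|))) * (X * η) + η * (h * K * (log X + 1 + |L|)) := by gcongr
    _ = _ := by ring

end ExpectedAverages

section AveragedIncrements

variable {L c D h K X η s : ℝ}

/-- The bound for the difference between the mean of `incrementSq x (h e^u)` over
`boxMeasure K X η` and its conjectural value: the first summand is what the asymptotic formula for
`V(x, δ)` provides, the second one comes from evaluating the main term. -/
noncomputable def averagingError (L c D h K X η : ℝ) : ℝ :=
  2 * D * exp 1 ^ 2 * (h ^ 2 + h * X * (h / X) ^ c) * log X +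
    (η ^ 2 * h * X * 5 + η * h * K) * (log X + 1 + |L|)

lemma abs_integral_boxMeasure_incrementSq_mul_exp_sub_le (hD : 0 ≤ D) (hh : 1 ≤ h)
    (hK : exp 1 * h ≤ K) (hKX : K ≤ X) (hη : 0 ≤ η) (hη1 : η ≤ 1)
    (hbound : ZetaVarDeltaBound L c D h K X) :
    |(∫ p, incrementSq p.1 (h * exp p.2) ∂boxMeasure K X η) - η * (h * X * (log (X / h) - L))| ≤
      averagingError L c D h K X η := by
  have h0 : 0 < h := zero_lt_one.trans_le hh
  have hKη := mul_exp_le_of_le_one h0 hη1 hK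
  have hK0 : 0 ≤ K := le_trans (by positivity) hKη
  have hsq := integrable_boxMeasure_incrementSq_mul_exp (X := X) (η := η) hK0 h0.le
  have hexpected := integrable_boxMeasure_expectedIncrementSq (L := L) (X := X) hh hKη
    (measurable_exp.const_mul h) fun u hu => mul_exp_mem_Icc h0.le hu
  have herror : |∫ p, incrementSqError L p.1 (h * exp p.2) ∂boxMeasure K X η| ≤
      2 * D * exp 1 ^ 2 * (h ^ 2 + h * X * (h / X) ^ c) * log X := by
    have hInt : Integrable (fun p => incrementSqError L p.1 (h * exp p.2))
        (boxMeasure K X η) := hsq.sub hexpected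
    rw [boxMeasure, integral_prod _ hInt]
    exact abs_integral_incrementSqError_le hD hh hK hKX hη1 hbound
  have hsplit : ∫ p, incrementSqError L p.1 (h * exp p.2) ∂boxMeasure K X η =
      (∫ p, incrementSq p.1 (h * exp p.2) ∂boxMeasure K X η) -
        ∫ p, expectedIncrementSq L p.1 (h * exp p.2) ∂boxMeasure K X η :=
    integral_sub hsq hexpected
  rw [hsplit] at herror
  exact (abs_sub_le _ _ _).trans (add_le_add herror
    (abs_integral_boxMeasure_expectedIncrementSq_sub_le hh hK hKX hη hη1))

lemma abs_sq_sub_sq_le (a b : ℝ) (hs : 0 < s) :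
    |b ^ 2 - a ^ 2| ≤ (1 + 1 / s) * (a - b) ^ 2 + s * a ^ 2 := by
  have hyoung : 2 * |a * (a - b)| ≤ 1 / s * (a - b) ^ 2 + s * a ^ 2 := by
    have hsq : 1 / s * (a - b) ^ 2 + s * a ^ 2 - 2 * |a * (a - b)| =
        1 / s * (|a - b| - s * |a|) ^ 2 := by
      rw [abs_mul, ← sq_abs (a - b), ← sq_abs a]
      field_simp
      ring
    have : 0 ≤ 1 / s * (|a - b| - s * |a|) ^ 2 := by positivity
    linarith
  calc |b ^ 2 - a ^ 2| = |(a - b) ^ 2 - 2 * (a * (a - b))| := by ring_nf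
    _ ≤ |(a - b) ^ 2| + |2 * (a * (a - b))| := abs_sub _ _
    _ = (a - b) ^ 2 + 2 * |a * (a - b)| := by rw [abs_of_nonneg (sq_nonneg _), abs_mul, abs_two]
    _ ≤ (1 + 1 / s) * (a - b) ^ 2 + s * a ^ 2 := by linarith

lemma abs_incrementSq_sub_incrementSq_mul_exp_le (x h u : ℝ) (hs : 0 < s) :
    |incrementSq x h - incrementSq x (h * exp u)| ≤
      (1 + 1 / s) * incrementSq (x + h) (h * (exp u - 1)) + s * incrementSq x (h * exp u) := by
  have hle := abs_sq_sub_sq_le (psiRemainder (x + h * exp u) - psiRemainder x)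
    (psiRemainder (x + h) - psiRemainder x) hs
  rw [sub_sub_sub_cancel_right] at hle
  simpa only [incrementSq, show x + h + h * (exp u - 1) = x + h * exp u by ring] using hle

lemma abs_mul_integral_incrementSq_sub_le (hK : 0 ≤ K) (hh : 0 ≤ h) (hη : 0 ≤ η) (hs : 0 < s) :
    |η * (∫ x in Icc K X, incrementSq x h) -
        ∫ p, incrementSq p.1 (h * exp p.2) ∂boxMeasure K X η| ≤
      (1 + 1 / s) * (∫ p, incrementSq (p.1 + h) (h * (exp p.2 - 1)) ∂boxMeasure K X η) +
        s * ∫ p, incrementSq p.1 (h * exp p.2) ∂boxMeasure K X η := by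
  have hconst := integrable_boxMeasure_incrementSq_const (X := X) (η := η) hK hh
  have hexp := integrable_boxMeasure_incrementSq_mul_exp (X := X) (η := η) hK hh
  have hshift := integrable_boxMeasure_incrementSq_shift (X := X) (η := η) hK hh
  rw [← integral_boxMeasure_fst (f := fun x => incrementSq x h) hη, ← integral_sub hconst hexp,
    ← integral_const_mul, ← integral_const_mul,
    ← integral_add (hshift.const_mul _) (hexp.const_mul _), ← norm_eq_abs]
  exact norm_integral_le_of_norm_le ((hshift.const_mul _).add (hexp.const_mul _))
    (Eventually.of_forall fun p => abs_incrementSq_sub_incrementSq_mul_exp_le p.1 h p.2 hs)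

lemma integral_boxMeasure_incrementSq_shift_le {N : ℝ} (hK : 0 ≤ K) (hh : 0 ≤ h) (hN : 0 ≤ N)
    (hle : ∫⁻ x in Ioo K X, ∫⁻ u in Ioo 0 η,
      ENNReal.ofReal (incrementSq (x + h) (h * (exp u - 1))) ≤ ENNReal.ofReal N) :
    ∫ p, incrementSq (p.1 + h) (h * (exp p.2 - 1)) ∂boxMeasure K X η ≤ N := by
  have hmeas : Measurable fun p : ℝ × ℝ => incrementSq (p.1 + h) (h * (exp p.2 - 1)) :=
    measurable_incrementSq (by fun_prop) (by fun_prop)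
  rwa [← ENNReal.ofReal_le_ofReal_iff hN,
    ofReal_integral_eq_lintegral_ofReal (integrable_boxMeasure_incrementSq_shift hK hh)
      (Eventually.of_forall fun p => incrementSq_nonneg _ _), boxMeasure,
    lintegral_prod _ hmeas.ennreal_ofReal.aemeasurable,
    Measure.restrict_congr_set (Ioo_ae_eq_Icc (a := K) (b := X)).symm,
    Measure.restrict_congr_set (Ioo_ae_eq_Icc (a := 0) (b := η)).symm]

lemma mul_mul_log_div_sub_le (hh : 1 ≤ h) (hX : 0 < X) :
    h * X * (log (X / h) - L) ≤ h * X * (log X + 1 + |L|) := by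
  have h0 : 0 < h := zero_lt_one.trans_le hh
  have hlog : log (X / h) ≤ log X := log_le_log (by positivity) (div_le_self hX.le hh)
  exact mul_le_mul_of_nonneg_left (by linarith [neg_abs_le L]) (mul_pos h0 hX).le

theorem mul_abs_integral_incrementSq_sub_le {N : ℝ} (hD : 0 ≤ D) (hh : 1 ≤ h)
    (hK : exp 1 * h ≤ K) (hKX : K ≤ X) (hη : 0 ≤ η) (hη1 : η ≤ 1) (hs : 0 < s)
    (hbound : ZetaVarDeltaBound L c D h K X)
    (hN : ∫ p, incrementSq (p.1 + h) (h * (exp p.2 - 1)) ∂boxMeasure K X η ≤ N) :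
    η * |(∫ x in Icc K X, incrementSq x h) - h * X * (log (X / h) - L)| ≤
      (1 + 1 / s) * N + (1 + s) * averagingError L c D h K X η +
        s * (η * h * X * (log X + 1 + |L|)) := by
  have h0 : 0 < h := zero_lt_one.trans_le hh
  have hK0 : 0 < K := lt_of_lt_of_le (by positivity) hK
  have hmean := abs_integral_boxMeasure_incrementSq_mul_exp_sub_le hD hh hK hKX hη hη1 hbound
  have hcompare := abs_mul_integral_incrementSq_sub_le (X := X) hK0.le h0.le hη hs
  have hmain := mul_le_mul_of_nonneg_left
    (mul_mul_log_div_sub_le (L := L) hh (hK0.trans_le hKX)) hη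
  set m := h * X * (log (X / h) - L)
  set J := ∫ p, incrementSq p.1 (h * exp p.2) ∂boxMeasure K X η
  have hJ : J ≤ averagingError L c D h K X η + η * (h * X * (log X + 1 + |L|)) := by
    linarith [(abs_le.1 hmean).2]
  calc η * |(∫ x in Icc K X, incrementSq x h) - m|
      = |η * (∫ x in Icc K X, incrementSq x h) - η * m| := by
        rw [← mul_sub, abs_mul, abs_of_nonneg hη]
    _ ≤ (1 + 1 / s) * N + s * J + averagingError L c D h K X η := by
        refine (abs_sub_le _ J _).trans (add_le_add (hcompare.trans ?_) hmean)
        gcongr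
    _ ≤ (1 + 1 / s) * N + s * (averagingError L c D h K X η +
          η * (h * X * (log X + 1 + |L|))) + averagingError L c D h K X η := by gcongr
    _ = _ := by ring

end AveragedIncrements

section Assembly

variable {L c D h K X s ε κ : ℝ}

lemma sq_rpow_two_sub_le (hε : 0 ≤ ε) (hX : 0 < X) (hs : 0 < s) (hs1 : s ≤ 1)
    (hXs : 1 / X ≤ s ^ 3) : (s ^ 2) ^ (2 - ε) ≤ s ^ 4 * X ^ ε := by
  have hneg : s ^ (-(2 * ε)) ≤ X ^ ε := calc
    s ^ (-(2 * ε)) ≤ s ^ (-(3 * ε)) := rpow_le_rpow_of_exponent_ge hs hs1 (by linarith)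
    _ = (s ^ 3) ^ (-ε) := by
      rw [← rpow_natCast, ← rpow_mul hs.le]
      push_cast
      ring_nf
    _ ≤ (1 / X) ^ (-ε) := rpow_le_rpow_of_nonpos (by positivity) hXs (by linarith)
    _ = X ^ ε := by rw [one_div, inv_rpow hX.le, rpow_neg hX.le, inv_inv]
  calc (s ^ 2) ^ (2 - ε) = s ^ 4 * s ^ (-(2 * ε)) := by
        rw [← rpow_natCast, ← rpow_natCast, ← rpow_mul hs.le, ← rpow_add hs]
        push_cast
        ring_nf
    _ ≤ s ^ 4 * X ^ ε := by gcongr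

lemma one_add_one_div_mul_le {C : ℝ} (hC : 0 ≤ C) (hh : 0 ≤ h) (hε : 0 ≤ ε) (hX : 0 < X)
    (hs : 0 < s) (hs1 : s ≤ 1) (hXs : 1 / X ≤ s ^ 3) :
    (1 + 1 / s) * (C * X ^ (1 + 3 * ε) * (s ^ 2) ^ (2 - ε) * h) ≤
      s ^ 3 * (2 * C * (h * X ^ (1 + 4 * ε))) := by
  have hinv : 1 + 1 / s ≤ 2 / s := by
    have : 1 ≤ 1 / s := (one_le_div hs).2 hs1
    linarith [show 2 / s = 1 / s + 1 / s by ring]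
  have hrpow : X ^ (1 + 4 * ε) = X ^ (1 + 3 * ε) * X ^ ε := by
    rw [← rpow_add hX]
    ring_nf
  calc (1 + 1 / s) * (C * X ^ (1 + 3 * ε) * (s ^ 2) ^ (2 - ε) * h)
      ≤ 2 / s * (C * X ^ (1 + 3 * ε) * (s ^ 4 * X ^ ε) * h) := by
        gcongr
        exact sq_rpow_two_sub_le hε hX hs hs1 hXs
    _ = s ^ 3 * (2 * C * (h * X ^ (1 + 4 * ε))) := by
        rw [hrpow]
        field_simp

lemma mul_mul_log_add_le (hε : 0 < ε) (hh : 0 ≤ h) (hX : 1 ≤ X) :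
    h * X * (log X + 1 + |L|) ≤ (1 / ε + 1 + |L|) * (h * X ^ (1 + 4 * ε)) := by
  have hX0 : 0 < X := zero_lt_one.trans_le hX
  have hlog : log X + 1 + |L| ≤ (1 / ε + 1 + |L|) * X ^ ε := calc
    log X + 1 + |L| ≤ X ^ ε / ε + (1 + |L|) * 1 := by linarith [log_le_rpow_div hX0.le hε]
    _ ≤ X ^ ε / ε + (1 + |L|) * X ^ ε := by
      gcongr
      exact one_le_rpow hX hε.le
    _ = (1 / ε + 1 + |L|) * X ^ ε := by ring
  calc h * X * (log X + 1 + |L|) ≤ h * X * ((1 / ε + 1 + |L|) * X ^ ε) := by gcongr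
    _ = (1 / ε + 1 + |L|) * (h * X ^ (1 + ε)) := by
        rw [rpow_add hX0, rpow_one]
        ring
    _ ≤ (1 / ε + 1 + |L|) * (h * X ^ (1 + 4 * ε)) := by
        gcongr
        linarith

lemma averagingError_sq_le (hD : 0 ≤ D) (hκ : 0 ≤ κ) (hh : 0 ≤ h) (hhK : h ≤ K) (hX : 1 ≤ X)
    (hs : 0 ≤ s) (hs1 : s ≤ 1) (hcs : (h / X) ^ c ≤ s ^ 3) (hKs : K ≤ κ * s ^ 3 * X) :
    averagingError L c D h K X (s ^ 2) ≤
      (2 * D * exp 1 ^ 2 * (κ + 1) + (5 + κ)) * (s ^ 3 * (h * X * (log X + 1 + |L|))) := by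
  have hlogX : 0 ≤ log X := log_nonneg hX
  have hK0 : 0 ≤ K := hh.trans hhK
  have hs4 : (s ^ 2) ^ 2 ≤ s ^ 3 := by
    rw [← pow_mul]
    exact pow_le_pow_of_le_one hs hs1 (by norm_num)
  have hs2K : s ^ 2 * h * K ≤ 1 * h * (κ * s ^ 3 * X) := by
    gcongr
    exact pow_le_one₀ hs hs1
  have hleading : h ^ 2 + h * X * (h / X) ^ c ≤ h * (κ * s ^ 3 * X) + h * X * s ^ 3 := by
    rw [sq]
    gcongr
    exact hhK.trans hKs
  calc averagingError L c D h K X (s ^ 2)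
      ≤ 2 * D * exp 1 ^ 2 * (h * (κ * s ^ 3 * X) + h * X * s ^ 3) * (log X + 1 + |L|) +
          (s ^ 3 * h * X * 5 + 1 * h * (κ * s ^ 3 * X)) * (log X + 1 + |L|) := by
        rw [averagingError]
        have hlog : log X ≤ log X + 1 + |L| := by linarith [abs_nonneg L]
        gcongr
    _ = _ := by ring

theorem exists_abs_integral_Icc_incrementSq_sub_le (hRH : RiemannHypothesis) (hε : 0 < ε)
    (hε1 : ε < 1) (L c : ℝ) (hD : 0 ≤ D) (hκ : 0 ≤ κ) :
    ∃ C : ℝ, 0 < C ∧ ∀ h K X s : ℝ, 1 ≤ h → exp 1 * h ≤ K → K ≤ X → 0 < s → s ≤ 1 →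
      (h / X) ^ c ≤ s ^ 3 → K ≤ κ * s ^ 3 * X → 1 / X ≤ s ^ 3 → ZetaVarDeltaBound L c D h K X →
      |(∫ x in Icc K X, incrementSq x h) - h * X * (log (X / h) - L)| ≤
        C * (h * X ^ (1 + 4 * ε) * s) := by
  obtain ⟨C, hC, hshift⟩ := exists_lintegral_incrementSq_exp_le hRH hε hε1
  set A := 2 * D * exp 1 ^ 2 * (κ + 1) + (5 + κ)
  set B := 1 / ε + 1 + |L|
  refine ⟨2 * C + (2 * A + 1) * B, by positivity,
    fun h K X s hh hK hKX hs hs1 hcs hKs hXs hbound => ?_⟩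
  have h0 : 0 < h := zero_lt_one.trans_le hh
  have hhK : h ≤ K := (le_mul_of_one_le_left h0.le (one_le_exp zero_le_one)).trans hK
  have hX1 : 1 ≤ X := hh.trans (hhK.trans hKX)
  have hX0 : 0 < X := zero_lt_one.trans_le hX1
  have hη1 : s ^ 2 ≤ 1 := pow_le_one₀ hs.le hs1
  have haverage := mul_abs_integral_incrementSq_sub_le hD hh hK hKX (sq_nonneg s) hη1 hs hbound
    (integral_boxMeasure_incrementSq_shift_le (h0.le.trans hhK) h0.le (by positivity)
      (hshift h K X (s ^ 2) hh (hhK.trans hKX) (hh.trans hhK) (by positivity) hη1))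
  have hshiftTerm := one_add_one_div_mul_le hC.le h0.le hε.le hX0 hs hs1 hXs
  have herror := averagingError_sq_le (L := L) hD hκ h0.le hhK hX1 hs.le hs1 hcs hKs
  have hlog := mul_mul_log_add_le (L := L) hε h0.le hX1
  have hlogX : 0 ≤ log X := log_nonneg hX1
  set W := h * X ^ (1 + 4 * ε)
  set Y := h * X * (log X + 1 + |L|)
  refine le_of_mul_le_mul_left (haverage.trans ?_) (by positivity : 0 < s ^ 2)
  calc _ ≤ s ^ 3 * (2 * C * W) + 2 * (A * (s ^ 3 * Y)) + s * (s ^ 2 * Y) := by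
        gcongr ?_ + ?_ + s * ?_
        · exact (mul_le_mul_of_nonneg_left herror (by linarith)).trans (by gcongr; linarith)
        · exact le_of_eq (by ring)
    _ = s ^ 3 * (2 * C * W + (2 * A + 1) * Y) := by ring
    _ ≤ s ^ 3 * (2 * C * W + (2 * A + 1) * (B * W)) := by gcongr
    _ = s ^ 2 * ((2 * C + (2 * A + 1) * B) * (W * s)) := by ring

lemma rpow_one_add_le_mul_rpow (hε : 0 ≤ ε) (hκ : 0 ≤ κ) (hK : 0 < K) (hKX : K ≤ X) (hX : 1 ≤ X)
    (hs : 0 ≤ s) (hs1 : s ≤ 1) (hKs : K ≤ κ * s ^ 3 * X) :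
    K ^ (1 + 3 * ε) ≤ κ * (X ^ (1 + 4 * ε) * s) := by
  have hX0 : 0 < X := zero_lt_one.trans_le hX
  calc K ^ (1 + 3 * ε) = K * K ^ (3 * ε) := by rw [rpow_add hK, rpow_one]
    _ ≤ κ * s ^ 3 * X * X ^ (4 * ε) := by
        gcongr
        exact (rpow_le_rpow hK.le hKX (by positivity)).trans
          (rpow_le_rpow_of_exponent_le hX (by linarith))
    _ ≤ κ * s * X * X ^ (4 * ε) := by
        gcongr
        exact pow_le_of_le_one hs hs1 (by norm_num)
    _ = κ * (X ^ (1 + 4 * ε) * s) := by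
        rw [rpow_add hX0, rpow_one]
        ring

lemma zetaVarH_eq_integral_add_integral (hh : 0 ≤ h) (hK : 1 ≤ K) (hKX : K ≤ X) :
    zetaVarH X h = (∫ x in (1 : ℝ)..K, incrementSq x h) + ∫ x in Icc K X, incrementSq x h := by
  have hInt {a b : ℝ} (ha : 0 ≤ a) (hab : a ≤ b) :
      IntervalIntegrable (fun x => incrementSq x h) volume a b :=
    (intervalIntegrable_iff_integrableOn_Ioo_of_le hab).2 (integrableOn_incrementSq ha hh)
  rw [zetaVarH_eq_integral, integral_Icc_eq_integral_Ioc, ← intervalIntegral.integral_of_le hKX,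
    intervalIntegral.integral_add_adjacent_intervals (hInt zero_le_one hK)
      (hInt (zero_le_one.trans hK) hKX)]

theorem exists_abs_zetaVarH_sub_le (hRH : RiemannHypothesis) (hε : 0 < ε) (hε1 : ε < 1)
    (L c : ℝ) (hD : 0 ≤ D) (hκ : 0 ≤ κ) :
    ∃ C : ℝ, 0 < C ∧ ∀ h K X s : ℝ, 1 ≤ h → exp 1 * h ≤ K → K ≤ X → 0 < s → s ≤ 1 →
      (h / X) ^ c ≤ s ^ 3 → K ≤ κ * s ^ 3 * X → 1 / X ≤ s ^ 3 → ZetaVarDeltaBound L c D h K X →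
      |zetaVarH X h - h * X * (log (X / h) - L)| ≤ C * (h * X ^ (1 + 4 * ε) * s) := by
  obtain ⟨C, hC, hmiddle⟩ := exists_abs_integral_Icc_incrementSq_sub_le hRH hε hε1 L c hD hκ
  obtain ⟨C', hC', hlow⟩ := exists_integral_incrementSq_le hRH hε hε1
  refine ⟨C' * κ + C, by positivity, fun h K X s hh hK hKX hs hs1 hcs hKs hXs hbound => ?_⟩
  have h0 : 0 < h := zero_lt_one.trans_le hh
  have hhK : h ≤ K := (le_mul_of_one_le_left h0.le (one_le_exp zero_le_one)).trans hK
  have hK1 : 1 ≤ K := hh.trans hhK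
  have hinitial : |∫ x in (1 : ℝ)..K, incrementSq x h| ≤
      C' * κ * (h * X ^ (1 + 4 * ε) * s) := by
    rw [abs_of_nonneg (intervalIntegral.integral_nonneg hK1 fun x _ => incrementSq_nonneg x h)]
    calc ∫ x in (1 : ℝ)..K, incrementSq x h ≤ C' * K ^ (1 + 3 * ε) * h := hlow h K hh hhK
      _ ≤ C' * (κ * (X ^ (1 + 4 * ε) * s)) * h := by
          gcongr
          exact rpow_one_add_le_mul_rpow hε.le hκ (zero_lt_one.trans_le hK1) hKX
            (hK1.trans hKX) hs.le hs1 hKs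
      _ = C' * κ * (h * X ^ (1 + 4 * ε) * s) := by ring
  rw [zetaVarH_eq_integral_add_integral h0.le hK1 hKX, add_sub_assoc, add_mul]
  exact (abs_add_le _ _).trans
    (add_le_add hinitial (hmiddle h K X s hh hK hKX hs hs1 hcs hKs hXs hbound))

end Assembly

section Parameters

variable {B₁ B₂ B₃ c D h p x X X₀ : ℝ}

/-- The point from which on the hypothesis on `V(x, δ)` controls every `δ` with
`h ≤ δ x ≤ e h`; it is the solution of `K ^ p = e h`, where `p = 1 - B₁`. -/
noncomputable def lowerCutoff (p h : ℝ) : ℝ := (exp 1 * h) ^ (1 / p)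

lemma exp_one_mul_le_lowerCutoff (hp : 0 < p) (hp1 : p ≤ 1) (hh : 1 ≤ h) :
    exp 1 * h ≤ lowerCutoff p h :=
  self_le_rpow_of_one_le (one_le_mul_of_one_le_of_one_le (one_le_exp zero_le_one) hh)
    ((one_le_div hp).2 hp1)

lemma lowerCutoff_le_iff (hp : 0 < p) (hh : 0 ≤ h) (hx : 0 ≤ x) :
    lowerCutoff p h ≤ x ↔ exp 1 * h ≤ x ^ p := by
  rw [lowerCutoff, one_div, rpow_inv_le_iff_of_pos (by positivity) hx hp]

/-- The relative size of the error term of `Ṽ(X, h)`, for `p = 1 - B₁`; its cube dominates both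
`(h / X) ^ c` and, up to a constant, `lowerCutoff p h / X`. -/
noncomputable def errorSaving (c p h X : ℝ) : ℝ :=
  max ((h / X) ^ (c / 3)) ((h * X ^ (-p)) ^ (1 / (3 * p)))

lemma errorSaving_pos (hh : 0 < h) (hX : 0 < X) : 0 < errorSaving c p h X :=
  lt_max_of_lt_left (by positivity)

lemma errorSaving_le_one (hc : 0 ≤ c) (hp : 0 < p) (hh : 0 ≤ h) (hX : 0 < X) (hhX : h ≤ X)
    (hhXp : h ≤ X ^ p) : errorSaving c p h X ≤ 1 := by
  refine max_le (rpow_le_one (by positivity) ((div_le_one hX).2 hhX) (by positivity))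
    (rpow_le_one (by positivity) ?_ (by positivity))
  rwa [rpow_neg hX.le, ← div_eq_mul_inv, div_le_one (by positivity)]

lemma errorSaving_le_add (hh : 0 ≤ h) (hX : 0 ≤ X) :
    errorSaving c p h X ≤ (h / X) ^ (c / 3) + (h * X ^ (-p)) ^ (1 / (3 * p)) :=
  max_le_add_of_nonneg (by positivity) (by positivity)

lemma rpow_le_errorSaving_cube (hh : 0 ≤ h) (hX : 0 ≤ X) :
    (h / X) ^ c ≤ errorSaving c p h X ^ 3 := calc
  (h / X) ^ c = ((h / X) ^ (c / 3)) ^ 3 := by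
    rw [← rpow_natCast, ← rpow_mul (by positivity)]
    push_cast
    ring_nf
  _ ≤ errorSaving c p h X ^ 3 := pow_le_pow_left₀ (by positivity) (le_max_left _ _) 3

lemma rpow_one_div_div_le_errorSaving_cube (hp : 0 < p) (hh : 0 ≤ h) (hX : 0 ≤ X) :
    h ^ (1 / p) / X ≤ errorSaving c p h X ^ 3 := calc
  h ^ (1 / p) / X = ((h * X ^ (-p)) ^ (1 / (3 * p))) ^ 3 := by
    rw [← rpow_natCast, ← rpow_mul (by positivity),
      show 1 / (3 * p) * ((3 : ℕ) : ℝ) = 1 / p by push_cast; field_simp,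
      mul_rpow hh (by positivity), ← rpow_mul hX, show -p * (1 / p) = -1 by field_simp,
      rpow_neg_one, div_eq_mul_inv]
  _ ≤ errorSaving c p h X ^ 3 := pow_le_pow_left₀ (by positivity) (le_max_right _ _) 3

lemma lowerCutoff_le_mul_errorSaving_cube (hp : 0 < p) (hh : 0 ≤ h) (hX : 0 < X) :
    lowerCutoff p h ≤ exp 1 ^ (1 / p) * errorSaving c p h X ^ 3 * X := by
  rw [lowerCutoff, mul_rpow (exp_pos 1).le hh, mul_assoc]
  gcongr
  exact (div_le_iff₀ hX).1 (rpow_one_div_div_le_errorSaving_cube hp hh hX.le)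

lemma one_div_le_errorSaving_cube (hp : 0 < p) (hh : 1 ≤ h) (hX : 0 ≤ X) :
    1 / X ≤ errorSaving c p h X ^ 3 :=
  (div_le_div_of_nonneg_right (one_le_rpow hh (by positivity)) hX).trans
    (rpow_one_div_div_le_errorSaving_cube hp (zero_le_one.trans hh) hX)

lemma eventually_range_le (X₀ : ℝ) (hB₁₂ : B₁ < B₂) (hB₃ : B₃ < 1) :
    ∀ᶠ X : ℝ in atTop, 1 ≤ X ∧ ∀ h, X ^ (1 - B₃) ≤ h → h ≤ X ^ (1 - B₂) →
      1 ≤ h ∧ X₀ ≤ h ∧ exp 1 * h ≤ X ^ (1 - B₁) := by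
  filter_upwards [eventually_ge_atTop 1,
    (tendsto_rpow_atTop (sub_pos.2 hB₃)).eventually_ge_atTop (max 1 X₀),
    (tendsto_rpow_atTop (sub_pos.2 hB₁₂)).eventually_ge_atTop (exp 1)] with X hX hlower hupper
  refine ⟨hX, fun h hh hh' => ?_⟩
  have hmax : max 1 X₀ ≤ h := hlower.trans hh
  have h1 : 1 ≤ h := (le_max_left _ _).trans hmax
  refine ⟨h1, (le_max_right _ _).trans hmax, ?_⟩
  calc exp 1 * h ≤ X ^ (B₂ - B₁) * X ^ (1 - B₂) := by gcongr
    _ = X ^ (1 - B₁) := by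
        rw [← rpow_add (zero_lt_one.trans_le hX)]
        ring_nf

lemma zetaVarDeltaBound_lowerCutoff {L : ℝ} (hB₁ : 0 ≤ B₁) (hB₁' : B₁ < 1) (hB₃ : B₃ ≤ 1)
    (hbound : ∀ x, X₀ ≤ x → ∀ δ, x ^ (-B₃) ≤ δ → δ ≤ x ^ (-B₁) →
      |zetaVarDeltaError L x δ| ≤ D * δ ^ (1 + c) * x ^ 2)
    (hh : 1 ≤ h) (hX₀ : X₀ ≤ h) (hX : X ^ (1 - B₃) ≤ h) :
    ZetaVarDeltaBound L c |D| h (lowerCutoff (1 - B₁) h) X := by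
  intro x ⟨hKx, hxX⟩ δ hδ ⟨hhδ, hδh⟩
  have hhx : h ≤ x := (le_mul_of_one_le_left (zero_le_one.trans hh) (one_le_exp zero_le_one)).trans
    ((exp_one_mul_le_lowerCutoff (sub_pos.2 hB₁') (by linarith) hh).trans hKx)
  have hx0 : 0 < x := by linarith
  have hrpow (B : ℝ) : x ^ (-B) = x ^ (1 - B) / x := by
    rw [← rpow_sub_one hx0.ne']
    ring_nf
  have hlower : x ^ (-B₃) ≤ δ := by
    rw [hrpow, div_le_iff₀ hx0]
    exact (rpow_le_rpow hx0.le hxX (by linarith)).trans (hX.trans hhδ)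
  have hupper : δ ≤ x ^ (-B₁) := by
    rw [hrpow, le_div_iff₀ hx0]
    rw [mul_comm h] at hδh
    exact hδh.trans ((lowerCutoff_le_iff (sub_pos.2 hB₁') (by linarith) hx0.le).1 hKx)
  refine (hbound x (hX₀.trans hhx) δ hlower hupper).trans ?_
  gcongr
  exact le_abs_self D

theorem exists_abs_zetaVarH_sub_le_errorSaving (hRH : RiemannHypothesis) {ε : ℝ} (hε : 0 < ε)
    (L : ℝ) (hc : 0 ≤ c) (hD : 0 ≤ D) (hp : 0 < p) (hp1 : p ≤ 1) :
    ∃ C : ℝ, 0 < C ∧ ∀ h X : ℝ, 1 ≤ h → 1 ≤ X → exp 1 * h ≤ X ^ p →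
      ZetaVarDeltaBound L c D h (lowerCutoff p h) X →
      |zetaVarH X h - h * X * (log (X / h) - L)| ≤
        C * (h * X ^ (1 + ε) * errorSaving c p h X) := by
  obtain ⟨C, hC, hcore⟩ := exists_abs_zetaVarH_sub_le hRH (ε := min ε 1 / 4) (by positivity)
    (by linarith [min_le_right ε 1]) L c hD (rpow_nonneg (exp_pos 1).le (1 / p))
  refine ⟨C, hC, fun h X hh hX hhX hbound => ?_⟩
  have h0 : 0 < h := zero_lt_one.trans_le hh
  have hX0 : 0 < X := zero_lt_one.trans_le hX
  have hhXp : h ≤ X ^ p := (le_mul_of_one_le_left h0.le (one_le_exp zero_le_one)).trans hhX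
  have hpos : 0 < errorSaving c p h X := errorSaving_pos h0 hX0
  have hmain := hcore h (lowerCutoff p h) X (errorSaving c p h X) hh
    (exp_one_mul_le_lowerCutoff hp hp1 hh) ((lowerCutoff_le_iff hp h0.le hX0.le).2 hhX)
    hpos (errorSaving_le_one hc hp h0.le hX0 (hhXp.trans (rpow_le_self_of_one_le hX hp1)) hhXp)
    (rpow_le_errorSaving_cube h0.le hX0.le) (lowerCutoff_le_mul_errorSaving_cube hp h0.le hX0)
    (one_div_le_errorSaving_cube hp hh hX0.le) hbound
  refine hmain.trans ?_
  gcongr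
  linarith [min_le_left ε 1]

end Parameters

/-- **Theorem C1 for the Riemann zeta function.** An asymptotic for `V(X,δ)` with power
saving implies an asymptotic for `Ṽ(X,h)`. -/
theorem theoremC1_zeta (hRH : RiemannHypothesis)
    (B₁ B₂ B₃ c : ℝ) (hB₁ : 0 < B₁) (hB₁₂ : B₁ < B₂) (hB₂₃ : B₂ ≤ B₃) (hB₃ : B₃ < 1)
    (hc : 0 < c) (D X₀ : ℝ)
    (hV : ∀ X : ℝ, X₀ ≤ X → ∀ δ : ℝ, X ^ (-B₃) ≤ δ → δ ≤ X ^ (-B₁) →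
      |zetaVarDelta X δ - 1 / 2 * δ * X ^ 2 *
          (Real.log (1 / δ) + 1 - Real.eulerMascheroniConstant - Real.log (2 * π))|
        ≤ D * δ ^ (1 + c) * X ^ 2) :
    ∀ ε : ℝ, 0 < ε → ∃ C : ℝ, 0 < C ∧ ∃ X₁ : ℝ, ∀ X : ℝ, X₁ ≤ X →
      ∀ h : ℝ, X ^ (1 - B₃) ≤ h → h ≤ X ^ (1 - B₂) →
        |zetaVarH X h - h * X *
            (Real.log (X / h) - Real.eulerMascheroniConstant - Real.log (2 * π))|
          ≤ C * (h * X ^ (1 + ε) * (h / X) ^ (c / 3) +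
              h * X ^ (1 + ε) * (h * X ^ (-(1 - B₁))) ^ (1 / (3 * (1 - B₁)))) := by
  intro ε hε
  simp only [sub_sub _ Real.eulerMascheroniConstant] at hV ⊢
  have hB₁' : B₁ < 1 := hB₁₂.trans (hB₂₃.trans_lt hB₃)
  obtain ⟨C, hC, hbound⟩ := exists_abs_zetaVarH_sub_le_errorSaving hRH hε
    (Real.eulerMascheroniConstant + Real.log (2 * π)) hc.le (abs_nonneg D) (sub_pos.2 hB₁')
    (sub_le_self 1 hB₁.le)
  obtain ⟨X₁, hX₁⟩ := eventually_atTop.1 (eventually_range_le X₀ hB₁₂ hB₃)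
  refine ⟨C, hC, X₁, fun X hX h hhl hhu => ?_⟩
  obtain ⟨hX1, hrange⟩ := hX₁ X hX
  obtain ⟨hh1, hhX₀, hhX⟩ := hrange h hhl hhu
  have hδ := zetaVarDeltaBound_lowerCutoff hB₁.le hB₁' hB₃.le hV hh1 hhX₀ hhl
  refine (hbound h X hh1 hX1 hhX hδ).trans ?_
  rw [← mul_add]
  gcongr
  exact errorSaving_le_add (by linarith) (by linarith)
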